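/- arXiv:1810.05255 — 3 statements merged into one kernel-verified Lean document; each statement's English description precedes it below -/
import Mathlib

section
/- Let f: X → Y be a finite surjective morphism of integral schemes with Y normal, let L be a line bundle on Y, and suppose there exists a nonzero global section h ∈ H⁰(X, f*L). Then there exists an integer n ≥ 1 such that H⁰(Y, L^⊗n) ≠ 0. -/
open AlgebraicGeometry CategoryTheory Opposite

universe u

/-- A line bundle on a scheme `Y`, presented by Čech data: an open cover `(U i)` together
with invertible transition functions `g i j ∈ Γ(Y, U i ⊓ U j)` satisfying the cocycle
condition. -/
structure LineBundleData (Y : Scheme.{u}) where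
  ι : Type u
  U : ι → Y.Opens
  covers : ∀ y : Y, ∃ i, y ∈ U i
  g : ∀ i j : ι, Y.presheaf.obj (op (U i ⊓ U j))
  g_unit : ∀ i j, IsUnit (g i j)
  g_self : ∀ i, g i i = 1
  cocycle : ∀ i j l : ι,
    Y.presheaf.map (homOfLE (inf_le_left : (U i ⊓ U j) ⊓ U l ≤ U i ⊓ U j)).op (g i j) *
      Y.presheaf.map (homOfLE (le_inf ((inf_le_left).trans inf_le_right)
        (inf_le_right) : (U i ⊓ U j) ⊓ U l ≤ U j ⊓ U l)).op (g j l) =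
    Y.presheaf.map (homOfLE (le_inf ((inf_le_left).trans inf_le_left)
        (inf_le_right) : (U i ⊓ U j) ⊓ U l ≤ U i ⊓ U l)).op (g i l)

/-- A global section of the `n`-th tensor power `L^⊗n`: a family of local sections glued via
the `n`-th powers of the transition functions. -/
def LineBundleData.IsSection {Y : Scheme.{u}} (L : LineBundleData Y) (n : ℕ)
    (s : ∀ i, Y.presheaf.obj (op (L.U i))) : Prop :=
  ∀ i j, Y.presheaf.map (homOfLE (inf_le_left : L.U i ⊓ L.U j ≤ L.U i)).op (s i)
    = (L.g i j) ^ n *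
      Y.presheaf.map (homOfLE (inf_le_right : L.U i ⊓ L.U j ≤ L.U j)).op (s j)

/-- A global section of the pullback line bundle `f*L` on `X`: a family of local sections
over the opens `f⁻¹(U i)`, glued via the pulled-back transition functions. -/
def LineBundleData.IsPullbackSection {X Y : Scheme.{u}} (f : X ⟶ Y) (L : LineBundleData Y)
    (t : ∀ i, X.presheaf.obj (op (f ⁻¹ᵁ L.U i))) : Prop :=
  ∀ i j,
    X.presheaf.map ((TopologicalSpace.Opens.map f.base).map
        (homOfLE (inf_le_left : L.U i ⊓ L.U j ≤ L.U i))).op (t i)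
      = f.app (L.U i ⊓ L.U j) (L.g i j) *
        X.presheaf.map ((TopologicalSpace.Opens.map f.base).map
          (homOfLE (inf_le_right : L.U i ⊓ L.U j ≤ L.U j))).op (t j)


lemma exists_section_of_local {Y : Scheme.{u}} [IsIntegral Y] (U : Y.Opens) (a : Y.functionField)
    (h : ∀ y ∈ U, ∃ b : Y.presheaf.stalk y, algebraMap _ Y.functionField b = a) :
    ∃ s : Y.presheaf.obj (op U), ∀ hU : genericPoint Y ∈ U, Y.presheaf.germ U _ hU s = a := by
  have key : ∀ y : U, ∃ V : Y.Opens, y.1 ∈ V ∧ V ≤ U ∧ ∃ s : Y.presheaf.obj (op V),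
      ∀ hV : genericPoint Y ∈ V, Y.presheaf.germ V _ hV s = a := by
    rintro ⟨y, hy⟩
    obtain ⟨b, hb⟩ := h y hy
    obtain ⟨V, hV, s, rfl⟩ := Y.presheaf.exists_germ_eq b
    have : Nonempty V := ⟨⟨y, hV⟩⟩
    refine ⟨V ⊓ U, ⟨hV, hy⟩, inf_le_right,
      Y.presheaf.map (homOfLE (inf_le_left : V ⊓ U ≤ V)).op s, fun hg => ?_⟩
    rw [TopCat.Presheaf.germ_res_apply, ← hb]
    exact (Scheme.algebraMap_germ_eq_germToFunctionField Y hV s).symm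
  choose V hyV hVU s hs using key
  obtain ⟨σ, hσ, -⟩ := Y.sheaf.existsUnique_gluing' V U (fun y => homOfLE (hVU y))
    (fun y hy => TopologicalSpace.Opens.mem_iSup.mpr ⟨⟨y, hy⟩, hyV _⟩) s (by
      intro i j
      have : genericPoint Y ∈ V i ⊓ V j := by
        constructor
        · exact (genericPoint_specializes i.1).mem_open (V i).isOpen (hyV i)
        · exact (genericPoint_specializes j.1).mem_open (V j).isOpen (hyV j)
      apply germ_injective_of_isIntegral Y (genericPoint Y) this
      erw [TopCat.Presheaf.germ_res_apply', TopCat.Presheaf.germ_res_apply']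
      rw [hs, hs])
  refine ⟨σ, fun hU => ?_⟩
  have hg : genericPoint Y ∈ V ⟨_, hU⟩ := hyV ⟨_, hU⟩
  rw [← hs ⟨_, hU⟩ hg, ← hσ ⟨_, hU⟩]
  exact (TopCat.Presheaf.germ_res_apply Y.presheaf (homOfLE (hVU ⟨_, hU⟩)) _ hg σ).symm

lemma section_ext_generic {Y : Scheme.{u}} [IsIntegral Y] (U : Y.Opens)
    (s t : Y.presheaf.obj (op U))
    (h : ∀ hU : genericPoint Y ∈ U, Y.presheaf.germ U _ hU s = Y.presheaf.germ U _ hU t) :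
    s = t := by
  by_cases hU : genericPoint Y ∈ U
  · exact germ_injective_of_isIntegral Y _ hU (h hU)
  · have : U = ⊥ := by
      rw [eq_bot_iff]
      intro y hy
      exact (hU ((genericPoint_specializes y).mem_open U.isOpen hy)).elim
    subst this
    exact Subsingleton.elim _ _

lemma genericPoint_map {X Y : Scheme.{u}} (f : X ⟶ Y)
    [IsIntegral X] [IsIntegral Y] [Surjective f] :
    f (genericPoint X) = genericPoint Y := by
  obtain ⟨x, hx⟩ := f.surjective (genericPoint Y)
  have h1 : f (genericPoint X) ⤳ f x := (genericPoint_specializes x).map f.continuous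
  rw [hx] at h1
  exact (h1.antisymm (genericPoint_specializes _)).eq

/-- The map of function fields. -/
noncomputable def functionFieldMap {X Y : Scheme.{u}} (f : X ⟶ Y)
    [IsIntegral X] [IsIntegral Y] [Surjective f] : Y.functionField ⟶ X.functionField :=
  Y.presheaf.stalkSpecializes (specializes_of_eq (genericPoint_map f)) ≫
    f.stalkMap (genericPoint X)

lemma functionFieldMap_germ {X Y : Scheme.{u}} (f : X ⟶ Y)
    [IsIntegral X] [IsIntegral Y] [Surjective f] (U : Y.Opens) (hU : genericPoint Y ∈ U)
    (hU' : genericPoint X ∈ f ⁻¹ᵁ U) (s : Y.presheaf.obj (op U)) :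
    functionFieldMap f (Y.presheaf.germ U _ hU s) =
      X.presheaf.germ (f ⁻¹ᵁ U) _ hU' (f.app U s) := by
  have : Y.presheaf.germ U _ hU ≫ functionFieldMap f =
      f.app U ≫ X.presheaf.germ (f ⁻¹ᵁ U) _ hU' := by
    rw [functionFieldMap, TopCat.Presheaf.germ_stalkSpecializes_assoc]
    exact f.germ_stalkMap U _ hU'
  exact congr($this s)

lemma integral_at_stalk {X Y : Scheme.{u}} (f : X ⟶ Y)
    [IsIntegral X] [IsIntegral Y] [IsFinite f] [Surjective f] (U : Y.Opens) (y : Y) (hy : y ∈ U)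
    (hU' : genericPoint X ∈ f ⁻¹ᵁ U) (t : X.presheaf.obj (op (f ⁻¹ᵁ U))) :
    ((functionFieldMap f).hom.comp (algebraMap (Y.presheaf.stalk y) Y.functionField)).IsIntegralElem
      (X.presheaf.germ (f ⁻¹ᵁ U) _ hU' t) := by
  obtain ⟨_, ⟨V, hV, rfl⟩, hyV, hVU⟩ :=
    Y.isBasis_affineOpens.exists_subset_of_mem_open hy U.isOpen
  have hVU : V ≤ U := hVU
  have hgV : genericPoint Y ∈ V := (genericPoint_specializes y).mem_open V.isOpen hyV
  have hgV' : genericPoint X ∈ f ⁻¹ᵁ V := by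
    change f (genericPoint X) ∈ V
    rwa [genericPoint_map]
  have : Nonempty V := ⟨⟨y, hyV⟩⟩
  let t' := X.presheaf.map ((TopologicalSpace.Opens.map f.base).map (homOfLE hVU)).op t
  have ht' : X.presheaf.germ (f ⁻¹ᵁ V) _ hgV' t' = X.presheaf.germ (f ⁻¹ᵁ U) _ hU' t :=
    TopCat.Presheaf.germ_res_apply _ _ _ _ _
  obtain ⟨p, hp, hpt⟩ := IsIntegralHom.isIntegral_app f V hV t'
  refine ⟨p.map (Y.presheaf.germ V y hyV).hom, hp.map _, ?_⟩
  rw [Polynomial.eval₂_map, ← ht']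
  have e : ((functionFieldMap f).hom.comp (algebraMap (Y.presheaf.stalk y) Y.functionField)).comp
      (Y.presheaf.germ V y hyV).hom =
      (X.presheaf.germ (f ⁻¹ᵁ V) _ hgV').hom.comp (f.app V).hom := by
    ext s
    refine Eq.trans ?_ (functionFieldMap_germ f V hgV hgV' s)
    exact congr(functionFieldMap f $(Scheme.algebraMap_germ_eq_germToFunctionField Y hyV s))
  rw [e]
  have := congr((X.presheaf.germ (f ⁻¹ᵁ V) _ hgV').hom $hpt)
  rw [Polynomial.hom_eval₂, map_zero] at this
  exact this

lemma coeff_mem_of_integral {O K M : Type*} [CommRing O] [IsDomain O] [Field K] [Field M]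
    [Algebra O K] [IsFractionRing O K] [IsIntegrallyClosed O] [Algebra K M] (x : M)
    (hx : ((algebraMap K M).comp (algebraMap O K)).IsIntegralElem x) :
    IsIntegral K x ∧ ∃ b : O, algebraMap O K b = (minpoly K x).coeff 0 := by
  let : Algebra O M := ((algebraMap K M).comp (algebraMap O K)).toAlgebra
  have : IsScalarTower O K M := IsScalarTower.of_algebraMap_eq' rfl
  have hx : IsIntegral O x := hx
  refine ⟨hx.tower_top, (minpoly O x).coeff 0, ?_⟩
  rw [minpoly.isIntegrallyClosed_eq_field_fractions' K hx, Polynomial.coeff_map]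

/-- Let `f : X ⟶ Y` be a finite surjective morphism of integral schemes with
`Y` normal (all local rings of `Y` are integrally closed), and let `L` be a line bundle on
`Y`.  If `f*L` has a nonzero global section on `X`, then there is `n ≥ 1` such that
`H⁰(Y, L^⊗n) ≠ 0`. -/
theorem stmt_0 {X Y : Scheme.{u}} (f : X ⟶ Y)
    [IsIntegral X] [IsIntegral Y] [IsFinite f] [Surjective f]
    (hnormal : ∀ y : Y, IsIntegrallyClosed (Y.presheaf.stalk y))
    (L : LineBundleData Y)
    (t : ∀ i, X.presheaf.obj (op (f ⁻¹ᵁ L.U i)))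
    (ht : L.IsPullbackSection f t) (htnz : ∃ i, t i ≠ 0) :
    ∃ n : ℕ, 1 ≤ n ∧ ∃ s : ∀ i, Y.presheaf.obj (op (L.U i)),
      L.IsSection n s ∧ ∃ i, s i ≠ 0 := by
  classical
  let : Algebra Y.functionField X.functionField := (functionFieldMap f).hom.toAlgebra
  have hφ : ∀ a, algebraMap Y.functionField X.functionField a = functionFieldMap f a :=
    fun _ => rfl
  have hgen : ∀ {U : Y.Opens}, genericPoint Y ∈ U → genericPoint X ∈ f ⁻¹ᵁ U := by
    intro U hU
    change f (genericPoint X) ∈ U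
    rwa [genericPoint_map]
  let τ : ∀ i, genericPoint Y ∈ L.U i → X.functionField :=
    fun i hi => X.presheaf.germ (f ⁻¹ᵁ L.U i) _ (hgen hi) (t i)
  have hint : ∀ i (hi : genericPoint Y ∈ L.U i), ∀ y ∈ L.U i, IsIntegral Y.functionField (τ i hi) ∧
      ∃ b : Y.presheaf.stalk y, algebraMap _ Y.functionField b =
        (minpoly Y.functionField (τ i hi)).coeff 0 := by
    intro i hi y hy
    have := hnormal y
    exact coeff_mem_of_integral (τ i hi) (integral_at_stalk f (L.U i) y hy (hgen hi) (t i))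
  have hsec : ∀ i, ∃ s : Y.presheaf.obj (op (L.U i)), ∀ hi : genericPoint Y ∈ L.U i,
      Y.presheaf.germ (L.U i) _ hi s = (minpoly Y.functionField (τ i hi)).coeff 0 := by
    intro i
    by_cases hi : genericPoint Y ∈ L.U i
    · obtain ⟨s, hs⟩ := exists_section_of_local (L.U i) _ (fun y hy => (hint i hi y hy).2)
      exact ⟨s, fun _ => hs hi⟩
    · exact ⟨0, fun h => (hi h).elim⟩
  choose s hs using hsec
  have hτ : ∀ i j (hi : genericPoint Y ∈ L.U i) (hj : genericPoint Y ∈ L.U j),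
      τ i hi = (Y.presheaf.germ (L.U i ⊓ L.U j) _ ⟨hi, hj⟩ (L.g i j) : Y.functionField) •
        τ j hj := by
    intro i j hi hj
    have h := congr(X.presheaf.germ (f ⁻¹ᵁ (L.U i ⊓ L.U j)) (genericPoint X)
      (hgen (U := L.U i ⊓ L.U j) ⟨hi, hj⟩) $(ht i j))
    rw [map_mul, ← functionFieldMap_germ f (L.U i ⊓ L.U j) ⟨hi, hj⟩] at h
    rw [Algebra.smul_def, hφ]
    refine Eq.trans ?_ (h.trans ?_)
    · exact (TopCat.Presheaf.germ_res_apply _ _ _ _ _).symm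
    · congr 1
      exact (TopCat.Presheaf.germ_res_apply _ _ _ _ _)
  have hmp : ∀ i j (hi : genericPoint Y ∈ L.U i) (hj : genericPoint Y ∈ L.U j),
      minpoly Y.functionField (τ i hi) = (minpoly Y.functionField (τ j hj)).scaleRoots
        (Y.presheaf.germ (L.U i ⊓ L.U j) _ ⟨hi, hj⟩ (L.g i j) : Y.functionField) := by
    intro i j hi hj
    rw [hτ i j hi hj]
    have hu : (Y.presheaf.germ (L.U i ⊓ L.U j) (genericPoint Y) ⟨hi, hj⟩ (L.g i j) :
      Y.functionField) ≠ 0 :=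
      ((L.g_unit i j).map (Y.presheaf.germ (L.U i ⊓ L.U j) (genericPoint Y) ⟨hi, hj⟩).hom).ne_zero
    exact IsIntegrallyClosed.minpoly_smul hu (hint j hj _ hj).1
  obtain ⟨i₀, hi₀⟩ := htnz
  have hg₀' : genericPoint X ∈ f ⁻¹ᵁ L.U i₀ := by
    by_contra hcon
    exact hi₀ (section_ext_generic _ _ _ fun h => (hcon h).elim)
  have hg₀ : genericPoint Y ∈ L.U i₀ := by
    rw [← genericPoint_map f]; exact hg₀'
  have hI := (hint i₀ hg₀ _ hg₀).1
  refine ⟨(minpoly Y.functionField (τ i₀ hg₀)).natDegree, minpoly.natDegree_pos hI, s, ?_, i₀, ?_⟩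
  · intro i j
    apply section_ext_generic
    intro h
    rw [map_mul, map_pow]
    have e1 := TopCat.Presheaf.germ_res_apply Y.presheaf
      (homOfLE (inf_le_left : L.U i ⊓ L.U j ≤ L.U i)) (genericPoint Y) h (s i)
    have e2 := TopCat.Presheaf.germ_res_apply Y.presheaf
      (homOfLE (inf_le_right : L.U i ⊓ L.U j ≤ L.U j)) (genericPoint Y) h (s j)
    rw [hs i h.1] at e1
    rw [hs j h.2] at e2
    refine e1.trans (Eq.trans ?_ congr(_ * $e2.symm))
    have hd : (minpoly Y.functionField (τ j h.2)).natDegree =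
        (minpoly Y.functionField (τ i₀ hg₀)).natDegree := by
      rw [hmp j i₀ h.2 hg₀, Polynomial.natDegree_scaleRoots]
    rw [hmp i j h.1 h.2, Polynomial.coeff_scaleRoots, hd, mul_comm, Nat.sub_zero]
  · intro h0
    have := hs i₀ hg₀
    rw [h0, map_zero] at this
    refine minpoly.coeff_zero_ne_zero hI ?_ this.symm
    intro hz
    apply hi₀
    apply germ_injective_of_isIntegral X _ hg₀'
    rw [map_zero]
    exact hz
end

section
/- Let G be an algebraic group over an algebraically closed field k acting on an irreducible k-variety X, and let Y ⊆ X be an irreducible closed subvariety. Suppose there is a nonempty open subset U ⊆ Y such that for all y ∈ U, the closed subset H(y) := {g ∈ G : g·y ∈ Y} of G has dimension dim(Y) + dim(G) − dim(X). Then there is a nonempty open subset V ⊆ X such that every x ∈ V lies in the G-orbit of some element of Y. -/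
open AlgebraicGeometry CategoryTheory CategoryTheory.Limits

universe u

/-- Data of an algebraic group `G` over a base `S` acting on a scheme `X` over `S`:
structure morphisms `p, q`, multiplication, unit, inverse, and an action morphism, all
compatible with the projections to `S`. -/
structure SchemeGroupAction (S G X : Scheme.{u}) where
  p : G ⟶ S
  q : X ⟶ S
  mul : pullback p p ⟶ G
  mul_over : mul ≫ p = pullback.fst p p ≫ p
  e : S ⟶ G
  e_sec : e ≫ p = 𝟙 S
  inv : G ⟶ G
  inv_over : inv ≫ p = p
  act : pullback p q ⟶ X
  act_over : act ≫ q = pullback.snd p q ≫ q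

namespace SchemeGroupAction

variable {S G X : Scheme.{u}} (D : SchemeGroupAction S G X)

/-- Product of two generalized points of `G` lying over the same point of `S`. -/
noncomputable def mulElt {W : Scheme.{u}} (g h : W ⟶ G) (hgh : g ≫ D.p = h ≫ D.p) :
    W ⟶ G :=
  pullback.lift g h hgh ≫ D.mul

/-- Action of a generalized point of `G` on one of `X`, over the same point of `S`. -/
noncomputable def actElt {W : Scheme.{u}} (g : W ⟶ G) (x : W ⟶ X) (hgx : g ≫ D.p = x ≫ D.q) :
    W ⟶ X :=
  pullback.lift g x hgx ≫ D.act

@[simp] lemma mulElt_over {W : Scheme.{u}} (g h : W ⟶ G) (hgh : g ≫ D.p = h ≫ D.p) :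
    D.mulElt g h hgh ≫ D.p = g ≫ D.p := by
  rw [mulElt, Category.assoc, D.mul_over, pullback.lift_fst_assoc]

@[simp] lemma actElt_over {W : Scheme.{u}} (g : W ⟶ G) (x : W ⟶ X)
    (hgx : g ≫ D.p = x ≫ D.q) :
    D.actElt g x hgx ≫ D.q = x ≫ D.q := by
  rw [actElt, Category.assoc, D.act_over, pullback.lift_snd_assoc]

/-- The group and action axioms, expressed on generalized points. -/
structure IsGroupAction : Prop where
  mul_assoc : ∀ (W : Scheme.{u}) (s : W ⟶ S) (g h l : W ⟶ G)
      (hg : g ≫ D.p = s) (hh : h ≫ D.p = s) (hl : l ≫ D.p = s),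
      D.mulElt (D.mulElt g h (hg.trans hh.symm)) l
          (by rw [D.mulElt_over, hg, hl])
        = D.mulElt g (D.mulElt h l (hh.trans hl.symm))
          (by rw [D.mulElt_over, hg, hh])
  one_mul : ∀ (W : Scheme.{u}) (g : W ⟶ G),
      D.mulElt (g ≫ D.p ≫ D.e) g
          (by rw [Category.assoc, Category.assoc, D.e_sec, Category.comp_id]) = g
  mul_one : ∀ (W : Scheme.{u}) (g : W ⟶ G),
      D.mulElt g (g ≫ D.p ≫ D.e)
          (by rw [Category.assoc, Category.assoc, D.e_sec, Category.comp_id]) = g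
  mul_inv : ∀ (W : Scheme.{u}) (g : W ⟶ G),
      D.mulElt g (g ≫ D.inv) (by rw [Category.assoc, D.inv_over]) = g ≫ D.p ≫ D.e
  inv_mul : ∀ (W : Scheme.{u}) (g : W ⟶ G),
      D.mulElt (g ≫ D.inv) g (by rw [Category.assoc, D.inv_over]) = g ≫ D.p ≫ D.e
  one_act : ∀ (W : Scheme.{u}) (x : W ⟶ X),
      D.actElt (x ≫ D.q ≫ D.e) x
          (by rw [Category.assoc, Category.assoc, D.e_sec, Category.comp_id]) = x
  act_assoc : ∀ (W : Scheme.{u}) (s : W ⟶ S) (g h : W ⟶ G) (x : W ⟶ X)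
      (hg : g ≫ D.p = s) (hh : h ≫ D.p = s) (hx : x ≫ D.q = s),
      D.actElt (D.mulElt g h (hg.trans hh.symm)) x
          (by rw [D.mulElt_over, hg, hx])
        = D.actElt g (D.actElt h x (hh.trans hx.symm))
          (by rw [D.actElt_over, hg, hx])

end SchemeGroupAction

section Chains

open TopologicalSpace Topology

/-- `GChain x y n`: there is a chain of `n` strict generizations going from `x` up to `y`. -/
inductive GChain {T : Type*} [TopologicalSpace T] : T → T → ℕ → Prop
  | refl (x : T) : GChain x x 0
  | step {x y z : T} {n : ℕ} (h : GChain x y n) (hz : z ⤳ y) (hne : z ≠ y) : GChain x z (n + 1)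

namespace GChain

variable {T T' : Type*} [TopologicalSpace T] [TopologicalSpace T']

lemma specializes {x y : T} {n : ℕ} (h : GChain x y n) : y ⤳ x := by
  induction h with
  | refl => exact specializes_rfl
  | step h hz hne ih => exact hz.trans ih

lemma trans {x y z : T} {n m : ℕ} (h : GChain x y n) (h' : GChain y z m) :
    GChain x z (n + m) := by
  induction h' with
  | refl => exact h
  | step h' hz hne ih => exact ih.step hz hne

lemma map {f : T → T'} (hf : Continuous f) (hi : Function.Injective f) {x y : T} {n : ℕ}
    (h : GChain x y n) : GChain (f x) (f y) n := by
  induction h with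
  | refl => exact refl _
  | step h hz hne ih => exact ih.step (hz.map hf) (hi.ne hne)

lemma lift {f : T → T'} (hf : GeneralizingMap f) {a : T} {x z : T'} {n : ℕ}
    (h : GChain x z n) (hx : f a = x) : ∃ b, f b = z ∧ GChain a b n := by
  induction h with
  | refl => exact ⟨a, hx, refl _⟩
  | step h hz hne ih =>
    obtain ⟨b, hb, hab⟩ := ih
    subst hb
    obtain ⟨c, hc, rfl⟩ := hf hz
    exact ⟨c, rfl, hab.step hc (fun e => hne (by rw [e]))⟩

/-- Pull back a chain along an inducing map with range stable under specialization. -/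
lemma comap {f : T → T'} (hf : IsInducing f) (hr : ∀ u v, u ∈ Set.range f → u ⤳ v → v ∈ Set.range f)
    {b : T} {x y : T'} {n : ℕ}
    (h : GChain x y n) (hy : f b = y) : ∃ a, f a = x ∧ GChain a b n := by
  induction h generalizing b with
  | refl => exact ⟨b, hy, refl _⟩
  | step h hz hne ih =>
    obtain ⟨c, rfl⟩ := hr _ _ ⟨b, hy⟩ hz
    obtain ⟨a, ha, hac⟩ := ih rfl
    refine ⟨a, ha, hac.step (z := b) ?_ ?_⟩
    · rw [← hf.specializes_iff, hy]; exact hz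
    · rintro rfl; exact hne hy.symm

/-- Pull back a chain along an inducing map with range stable under generization. -/
lemma comap' {f : T → T'} (hf : IsInducing f) (hr : ∀ u v, u ∈ Set.range f → v ⤳ u → v ∈ Set.range f)
    {a : T} {x y : T'} {n : ℕ}
    (h : GChain x y n) (hx : f a = x) : ∃ b, f b = y ∧ GChain a b n := by
  induction h with
  | refl => exact ⟨a, hx, refl _⟩
  | step h hz hne ih =>
    obtain ⟨b, hb, hab⟩ := ih
    obtain ⟨c, rfl⟩ := hr _ _ ⟨b, hb⟩ hz
    refine ⟨c, rfl, hab.step (z := c) ?_ ?_⟩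
    · rw [← hf.specializes_iff, hb]; exact hz
    · rintro rfl; exact hne hb

lemma exists_le {x x0 y : T} {n : ℕ} (h : GChain x y n) (hs : x ⤳ x0) :
    ∃ m, n ≤ m ∧ GChain x0 y m := by
  by_cases e : x = x0
  · subst e; exact ⟨n, le_rfl, h⟩
  · exact ⟨(0 + 1) + n, by omega, ((refl x0).step hs e).trans h⟩

lemma truncate {x y : T} {n : ℕ} (h : GChain x y n) : ∀ m, m ≤ n → ∃ z, GChain x z m := by
  induction h with
  | refl => intro m hm; obtain rfl : m = 0 := by omega
            exact ⟨_, refl _⟩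
  | @step y z n h hz hne ih =>
    intro m hm
    rcases Nat.lt_or_ge n m with h1 | h1
    · obtain rfl : m = n + 1 := by omega
      exact ⟨_, h.step hz hne⟩
    · exact ih m h1

/-- A chain of points gives a lower bound for the dimension. -/
lemma le_dim [T0Space T] {x y : T} {n : ℕ} (h : GChain x y n) :
    (n : WithBot ℕ∞) ≤ topologicalKrullDim T := by
  let c : T → IrreducibleCloseds T := fun x => ⟨closure {x}, isIrreducible_singleton.closure,
    isClosed_closure⟩
  suffices H : ∃ l : LTSeries (IrreducibleCloseds T), l.last = c y ∧ l.length = n by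
    obtain ⟨l, -, rfl⟩ := H
    exact Order.LTSeries.length_le_krullDim l
  induction h with
  | refl => exact ⟨RelSeries.singleton _ (c x), rfl, rfl⟩
  | @step y z n h hz hne ih =>
    obtain ⟨l, hl, hn⟩ := ih
    have hlt : l.last < c z := by
      rw [hl]
      refine lt_of_le_of_ne ?_ ?_
      · change closure {y} ⊆ closure {z}
        exact hz.closure_subset
      · intro e
        have e' : closure {y} = closure {z} :=
          congrArg (fun s : IrreducibleCloseds T => (s : Set T)) e
        apply hne
        have : Inseparable z y := by rw [inseparable_iff_closure_eq, e']
        exact this.eq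
    exact ⟨l.snoc (c z) hlt, by simp, by simp [hn]⟩

lemma exists_of_le_dim [T0Space T] [QuasiSober T] {n : ℕ}
    (hn : (n : WithBot ℕ∞) ≤ topologicalKrullDim T) : ∃ x y : T, GChain x y n := by
  obtain ⟨l, hl⟩ := Order.le_krullDim_iff.mp hn
  subst hl
  clear hn
  suffices H : ∀ (l : LTSeries (IrreducibleCloseds T)),
      ∃ x : T, GChain x (l.last.2.genericPoint) l.length from
    let ⟨x, hx⟩ := H l; ⟨x, _, hx⟩
  intro l
  induction l using RelSeries.inductionOn' with
  | singleton x => exact ⟨_, refl _⟩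
  | snoc l z hz' ih =>
    have hz : l.last < z := hz'
    obtain ⟨x, hx⟩ := ih
    refine ⟨x, ?_⟩
    simp only [RelSeries.last_snoc]
    have hc : ∀ s : IrreducibleCloseds T, closure {s.2.genericPoint} = (s : Set T) := by
      intro s
      rw [s.2.genericPoint_closure_eq, s.3.closure_eq]; rfl
    refine hx.step ?_ ?_
    · rw [specializes_iff_closure_subset, hc, hc]
      exact hz.le
    · intro e
      apply hz.ne
      apply IrreducibleCloseds.ext
      rw [← hc, ← hc, e]

end GChain

end Chains

section Rings

open TopologicalSpace Topology

namespace GChain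

lemma le_height {R : Type*} [CommRing R] {p q : PrimeSpectrum R} {n : ℕ} (h : GChain p q n) :
    (n : ℕ∞) ≤ p.asIdeal.height := by
  suffices H : ∃ l : LTSeries (PrimeSpectrum R), l.head = q ∧ l.last = p ∧ l.length = n by
    obtain ⟨l, -, rfl, rfl⟩ := H
    rw [PrimeSpectrum.height_eq_orderHeight]
    exact Order.length_le_height_last
  induction h with
  | refl => exact ⟨RelSeries.singleton _ p, rfl, rfl, rfl⟩
  | @step y z n h hz hne ih =>
    obtain ⟨l, hl, hl', hn⟩ := ih
    have hlt : z < l.head := by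
      rw [hl]
      exact lt_of_le_of_ne ((PrimeSpectrum.le_iff_specializes _ _).mpr hz) hne
    exact ⟨l.cons z hlt, by simp, by simp [hl'], by simp [hn]⟩

lemma exists_of_le_height {R : Type*} [CommRing R] (p : PrimeSpectrum R) {n : ℕ}
    (h : (n : ℕ∞) ≤ p.asIdeal.height) : ∃ q, GChain p q n := by
  rw [PrimeSpectrum.height_eq_orderHeight] at h
  obtain ⟨l, hl, rfl⟩ := Order.exists_series_of_le_height p h
  subst hl
  clear h
  suffices H : GChain l.last l.head l.length from ⟨_, H⟩
  induction l using RelSeries.inductionOn with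
  | singleton x => exact refl _
  | cons l x hx ih =>
    have hx' : x < l.head := hx
    simp only [RelSeries.last_cons, RelSeries.head_cons, RelSeries.cons_length]
    exact ih.step ((PrimeSpectrum.le_iff_specializes _ _).mp hx'.le) hx'.ne

end GChain

lemma range_comap_quotient_spec {R : Type*} [CommRing R] (I : Ideal R) :
    ∀ u v, u ∈ Set.range (PrimeSpectrum.comap (Ideal.Quotient.mk I)) → u ⤳ v →
      v ∈ Set.range (PrimeSpectrum.comap (Ideal.Quotient.mk I)) := by
  intro u v hu huv
  have := (PrimeSpectrum.isClosedEmbedding_comap_of_surjective _ (Ideal.Quotient.mk I)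
    Ideal.Quotient.mk_surjective).isClosed_range
  exact huv.mem_closed this hu

/-- The dimension inequality for a ring homomorphism, in terms of chains. -/
lemma ring_dim_inequality {A S : Type*} [CommRing A] [CommRing S] [IsNoetherianRing A]
    [IsNoetherianRing S] (f : A →+* S) (P Q : PrimeSpectrum S) (n : ℕ) (h : GChain P Q n) :
    ∃ a b : ℕ, n ≤ a + b ∧
      (∃ p', GChain (PrimeSpectrum.comap f P) p' a ∧ PrimeSpectrum.comap f Q ⤳ p') ∧
      (∃ P', GChain P P' b ∧ Q ⤳ P' ∧ PrimeSpectrum.comap f P' = PrimeSpectrum.comap f P) := by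
  let q : Ideal A := (PrimeSpectrum.comap f Q).asIdeal
  have hq : q ≤ Q.asIdeal.comap f := le_rfl
  let g : A ⧸ q →+* S ⧸ Q.asIdeal := Ideal.quotientMap Q.asIdeal f hq
  algebraize [g]
  have hPQ : Q.asIdeal ≤ P.asIdeal := (PrimeSpectrum.le_iff_specializes Q P).mpr h.specializes
  let mS := Ideal.Quotient.mk Q.asIdeal
  let mA := Ideal.Quotient.mk q
  have hS := PrimeSpectrum.isClosedEmbedding_comap_of_surjective _ mS Ideal.Quotient.mk_surjective
  have hA := PrimeSpectrum.isClosedEmbedding_comap_of_surjective _ mA Ideal.Quotient.mk_surjective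
  have hgf : g.comp mA = mS.comp f := by
    ext x; simp [g, mA, mS]
  let Q0 : PrimeSpectrum (S ⧸ Q.asIdeal) := ⟨⊥, Ideal.isPrime_bot⟩
  have hQ0 : PrimeSpectrum.comap mS Q0 = Q := by
    ext x
    simp [Q0, mS, Ideal.Quotient.eq_zero_iff_mem]
  obtain ⟨P1, hP1, hc⟩ := GChain.comap hS.isInducing (range_comap_quotient_spec _) h hQ0
  let p1 : PrimeSpectrum (A ⧸ q) := PrimeSpectrum.comap g P1
  have hp1 : PrimeSpectrum.comap mA p1 = PrimeSpectrum.comap f P := by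
    rw [← hP1]
    change (PrimeSpectrum.comap mA (PrimeSpectrum.comap g P1)) = _
    rw [← PrimeSpectrum.comap_comp_apply, hgf, PrimeSpectrum.comap_comp_apply]
  have : P1.asIdeal.LiesOver p1.asIdeal := ⟨rfl⟩
  have key := Ideal.height_le_height_add_of_liesOver p1.asIdeal P1.asIdeal
  have key := hc.le_height.trans key
  set J := p1.asIdeal.map (algebraMap (A ⧸ q) (S ⧸ Q.asIdeal)) with hJ
  have hJP : J ≤ P1.asIdeal := by
    rw [hJ, Ideal.map_le_iff_le_comap]; exact le_rfl
  let mJ := Ideal.Quotient.mk J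
  have hJe := PrimeSpectrum.isClosedEmbedding_comap_of_surjective _ mJ Ideal.Quotient.mk_surjective
  obtain ⟨P2, hP2⟩ : P1 ∈ Set.range (PrimeSpectrum.comap mJ) := by
    rw [range_comap_of_surjective _ _ Ideal.Quotient.mk_surjective]
    simpa [mJ] using hJP
  have hP2' : P1.asIdeal.map mJ = P2.asIdeal := by
    rw [← hP2]
    exact Ideal.map_comap_of_surjective _ Ideal.Quotient.mk_surjective _
  rw [hP2'] at key
  have ha : p1.asIdeal.height ≠ ⊤ := Ideal.height_ne_top_of_isPrime
  have hb : P2.asIdeal.height ≠ ⊤ := Ideal.height_ne_top_of_isPrime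
  obtain ⟨a, ha⟩ := ENat.ne_top_iff_exists.mp ha
  obtain ⟨b, hb⟩ := ENat.ne_top_iff_exists.mp hb
  rw [← ha, ← hb] at key
  refine ⟨a, b, by exact_mod_cast key, ?_, ?_⟩
  · obtain ⟨p2, hp2⟩ := GChain.exists_of_le_height p1 ha.le
    refine ⟨PrimeSpectrum.comap mA p2, hp1 ▸ hp2.map hA.continuous hA.injective, ?_⟩
    rw [← PrimeSpectrum.le_iff_specializes]
    intro x hx
    change mA x ∈ p2.asIdeal
    have : mA x = 0 := Ideal.Quotient.eq_zero_iff_mem.mpr hx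
    rw [this]; exact zero_mem _
  · obtain ⟨P3, hP3⟩ := GChain.exists_of_le_height P2 hb.le
    have h1 := hP3.map hJe.continuous hJe.injective
    have h2 := h1.map hS.continuous hS.injective
    rw [hP2, hP1] at h2
    refine ⟨_, h2, ?_, ?_⟩
    · rw [← PrimeSpectrum.le_iff_specializes]
      intro x hx
      change mJ (mS x) ∈ P3.asIdeal
      have : mS x = 0 := Ideal.Quotient.eq_zero_iff_mem.mpr hx
      rw [this, map_zero]; exact zero_mem _
    · apply le_antisymm
      · rw [PrimeSpectrum.le_iff_specializes]
        exact h2.specializes.map (PrimeSpectrum.continuous_comap f)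
      · rw [← hp1]
        rw [← PrimeSpectrum.comap_comp_apply f mS, ← hgf, PrimeSpectrum.comap_comp_apply]
        intro x hx
        change mJ (g (mA x)) ∈ P3.asIdeal
        have : mJ (g (mA x)) = 0 := Ideal.Quotient.eq_zero_iff_mem.mpr
          (Ideal.mem_map_of_mem (algebraMap (A ⧸ q) (S ⧸ Q.asIdeal)) hx)
        rw [this]; exact zero_mem _

lemma mvPolynomial_height_maximal {k : Type*} [Field k] (s : ℕ)
    (M : Ideal (MvPolynomial (Fin s) k)) [M.IsMaximal] : M.height = s := by
  induction s with
  | zero =>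
    have e := MvPolynomial.isEmptyRingEquiv k (Fin 0)
    have h : ringKrullDim (MvPolynomial (Fin 0) k) = 0 := by
      rw [ringKrullDim_eq_of_ringEquiv e, ringKrullDim_eq_zero_of_field]
    have := Ideal.height_le_ringKrullDim_of_isPrime (I := M)
    rw [h] at this
    simpa using this
  | succ s ih =>
    let e := (MvPolynomial.finSuccEquiv k s).toRingEquiv
    let M' : Ideal (Polynomial (MvPolynomial (Fin s) k)) := M.map e
    have hM' : M'.IsMaximal := Ideal.map_isMaximal_of_equiv e
    have hh : M'.height = M.height := RingEquiv.height_map e M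
    have hm : (M'.comap (Polynomial.C : MvPolynomial (Fin s) k →+* _)).IsMaximal :=
      Polynomial.isMaximal_comap_C_of_isJacobsonRing M'
    have hl : M'.LiesOver (M'.comap (Polynomial.C : MvPolynomial (Fin s) k →+* _)) := ⟨rfl⟩
    rw [← hh, Polynomial.height_eq_height_add_one
      (M'.comap (Polynomial.C : MvPolynomial (Fin s) k →+* _)) M', ih]
    simp

lemma ringKrullDim_le_height_maximal {k A : Type*} [Field k] [CommRing A] [IsDomain A] [Algebra k A]
    [Algebra.FiniteType k A] (M : Ideal A) [M.IsMaximal] : ringKrullDim A ≤ M.height := by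
  obtain ⟨s, g, hinj, hint⟩ := exists_integral_inj_algHom_of_fg k A
  have : IsNoetherianRing A := Algebra.FiniteType.isNoetherianRing k A
  let B := MvPolynomial (Fin s) k
  algebraize [g.toRingHom]
  have : Algebra.IsIntegral B A := ⟨hint⟩
  have : FaithfulSMul B A := (faithfulSMul_iff_algebraMap_injective B A).mpr hinj
  have : Algebra.HasGoingDown B A := inferInstance
  have hm : (M.under B).IsMaximal := inferInstance
  have h1 : ringKrullDim A ≤ s := by
    have : ringKrullDim A ≤ ringKrullDim B := by
      apply Order.krullDim_le_of_strictMono (PrimeSpectrum.comap (algebraMap B A))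
      intro p q hpq
      exact Ideal.comap_lt_comap_of_integral_mem_sdiff
        (R := B) (S := A) (I := p.asIdeal) (J := q.asIdeal) hpq.le
        (Set.exists_of_ssubset hpq).choose_spec (Algebra.IsIntegral.isIntegral _)
    refine this.trans ?_
    rw [MvPolynomial.ringKrullDim_of_isNoetherianRing]
    simp [ringKrullDim_eq_zero_of_field]
  refine h1.trans ?_
  have h2 := Ideal.height_eq_height_add_of_liesOver_of_hasGoingDown (M.under B) M
  rw [mvPolynomial_height_maximal] at h2
  have h3 : (s : ℕ∞) ≤ M.height := by rw [h2]; exact le_self_add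
  exact_mod_cast h3

end Rings

section Schemes

open TopologicalSpace Topology AlgebraicGeometry CategoryTheory CategoryTheory.Limits

universe v

lemma fromSpec_lift_chain {X : Scheme.{v}} {U : X.Opens} (hU : IsAffineOpen U)
    {x y : X} {n : ℕ} (h : GChain x y n) (hx : x ∈ U) :
    ∃ a b : PrimeSpectrum Γ(X, U), hU.fromSpec a = x ∧ hU.fromSpec b = y ∧ GChain a b n := by
  have hr : Set.range hU.fromSpec = (U : Set X) := hU.range_fromSpec
  obtain ⟨a, ha⟩ : x ∈ Set.range hU.fromSpec := by rw [hr]; exact hx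
  have hop : IsOpen (Set.range hU.fromSpec) := by rw [hr]; exact U.2
  obtain ⟨b, hb, hc⟩ := GChain.comap' hU.fromSpec.isOpenEmbedding.isInducing
    (fun u w hu hw => hw.mem_open hop hu) h ha
  exact ⟨a, b, ha, hb, hc⟩

lemma fromSpec_map_chain {X : Scheme.{v}} {U : X.Opens} (hU : IsAffineOpen U)
    {a b : PrimeSpectrum Γ(X, U)} {n : ℕ} (h : GChain a b n) :
    GChain (hU.fromSpec a) (hU.fromSpec b) n :=
  GChain.map (f := hU.fromSpec) hU.fromSpec.continuous hU.fromSpec.isOpenEmbedding.injective h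

lemma scheme_dim_inequality {P X : Scheme.{v}} [IsLocallyNoetherian P] [IsLocallyNoetherian X]
    (f : P ⟶ X) {w0 w1 : P} {n : ℕ} (h : GChain w0 w1 n) :
    ∃ a b, n ≤ a + b ∧ (∃ x', GChain (f w0) x' a ∧ f w1 ⤳ x') ∧
      (∃ w', GChain w0 w' b ∧ w1 ⤳ w' ∧ f w' = f w0) := by
  obtain ⟨U, hU, hxU, -⟩ := exists_isAffineOpen_mem_and_subset (x := f w0) (U := ⊤) trivial
  obtain ⟨V, hV, hwV, hVU⟩ := exists_isAffineOpen_mem_and_subset (x := w0) (U := f ⁻¹ᵁ U) hxU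
  have e : V ≤ f ⁻¹ᵁ U := hVU
  have : IsNoetherianRing Γ(X, U) := IsLocallyNoetherian.component_noetherian ⟨U, hU⟩
  have : IsNoetherianRing Γ(P, V) := IsLocallyNoetherian.component_noetherian ⟨V, hV⟩
  have key : ∀ q, hU.fromSpec (PrimeSpectrum.comap (f.appLE U V e).hom q) = f (hV.fromSpec q) := by
    intro q
    have := congrArg (fun φ => φ.base q) (IsAffineOpen.SpecMap_appLE_fromSpec f hU hV e)
    exact this
  obtain ⟨p, q, rfl, rfl, hc⟩ := fromSpec_lift_chain hV h hwV
  obtain ⟨a, b, hab, ⟨p', hp1, hp2⟩, ⟨q', hq1, hq2, hq3⟩⟩ :=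
    ring_dim_inequality (f.appLE U V e).hom p q n hc
  refine ⟨a, b, hab, ⟨hU.fromSpec p', ?_, ?_⟩, ⟨hV.fromSpec q', fromSpec_map_chain hV hq1, ?_, ?_⟩⟩
  · rw [← key]; exact fromSpec_map_chain hU hp1
  · rw [← key]; exact hp2.map hU.fromSpec.continuous
  · exact hq2.map hV.fromSpec.continuous
  · rw [← key, ← key, hq3]

lemma chain_bounded {X : Scheme.{v}} [IsLocallyNoetherian X] (x : X) :
    ∃ N : ℕ, ∀ y n, GChain x y n → n ≤ N := by
  obtain ⟨U, hU, hxU, -⟩ := exists_isAffineOpen_mem_and_subset (x := x) (U := ⊤) trivial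
  have : IsNoetherianRing Γ(X, U) := IsLocallyNoetherian.component_noetherian ⟨U, hU⟩
  obtain ⟨p, _, hp, -, -⟩ := fromSpec_lift_chain hU (GChain.refl x) hxU
  obtain ⟨N, hN⟩ := ENat.ne_top_iff_exists.mp (Ideal.height_ne_top p.2.ne_top)
  refine ⟨N, fun y n h => ?_⟩
  obtain ⟨p', q, hp', -, hc⟩ := fromSpec_lift_chain hU h hxU
  obtain rfl : p' = p := hU.fromSpec.isOpenEmbedding.injective (hp'.trans hp.symm)
  have := hc.le_height
  rw [← hN] at this
  exact_mod_cast this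

lemma constructible_generic {T : Type*} [TopologicalSpace T] (η : T)
    (hη : closure {η} = Set.univ) (s : Set T) (hs : IsConstructible s) :
    (η ∈ s → ∃ U : Set T, IsOpen U ∧ η ∈ U ∧ U ⊆ s) ∧
      (η ∉ s → ∃ U : Set T, IsOpen U ∧ η ∈ U ∧ U ⊆ sᶜ) := by
  induction hs using IsConstructible.empty_union_induction with
  | open_retrocompact U hU hr =>
    refine ⟨fun h => ⟨U, hU, h, subset_rfl⟩, fun h => ?_⟩
    have : U = ∅ := by
      by_contra hne
      obtain ⟨x, hx⟩ := Set.nonempty_iff_ne_empty.mpr hne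
      have : η ⤳ x := by rw [specializes_iff_mem_closure, hη]; trivial
      exact h (this.mem_open hU hx)
    exact ⟨Set.univ, isOpen_univ, trivial, by simp [this]⟩
  | union s hs t ht ih1 ih2 =>
    refine ⟨fun h => ?_, fun h => ?_⟩
    · rcases h with h | h
      · obtain ⟨U, h1, h2, h3⟩ := ih1.1 h
        exact ⟨U, h1, h2, h3.trans Set.subset_union_left⟩
      · obtain ⟨U, h1, h2, h3⟩ := ih2.1 h
        exact ⟨U, h1, h2, h3.trans Set.subset_union_right⟩
    · obtain ⟨U, h1, h2, h3⟩ := ih1.2 (fun hh => h (Or.inl hh))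
      obtain ⟨U', h1', h2', h3'⟩ := ih2.2 (fun hh => h (Or.inr hh))
      refine ⟨U ∩ U', h1.inter h1', ⟨h2, h2'⟩, ?_⟩
      rw [Set.compl_union]
      exact Set.inter_subset_inter h3 h3'
  | compl s hs ih =>
    refine ⟨fun h => ih.2 h, fun h => ?_⟩
    rw [compl_compl]
    exact ih.1 (not_not.mp h)

lemma chevalley_generic {P X : Scheme.{v}} [IsLocallyNoetherian P] [IsLocallyNoetherian X]
    [IrreducibleSpace X] (f : P ⟶ X) [LocallyOfFiniteType f] (W : Set P) (hW : IsClosed W)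
    (w : P) (hw : w ∈ W) (hfw : f w = genericPoint X) :
    ∃ V : Set X, IsOpen V ∧ V.Nonempty ∧ V ⊆ f '' W := by
  obtain ⟨U, hU, hxU, -⟩ := exists_isAffineOpen_mem_and_subset (x := f w) (U := ⊤) trivial
  obtain ⟨V, hV, hwV, hVU⟩ := exists_isAffineOpen_mem_and_subset (x := w) (U := f ⁻¹ᵁ U) hxU
  have e : V ≤ f ⁻¹ᵁ U := hVU
  have : IsNoetherianRing Γ(X, U) := IsLocallyNoetherian.component_noetherian ⟨U, hU⟩
  have : IsNoetherianRing Γ(P, V) := IsLocallyNoetherian.component_noetherian ⟨V, hV⟩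
  have key : ∀ q, hU.fromSpec (PrimeSpectrum.comap (f.appLE U V e).hom q) = f (hV.fromSpec q) := by
    intro q
    have := congrArg (fun φ => φ.base q) (IsAffineOpen.SpecMap_appLE_fromSpec f hU hV e)
    exact this
  have hft : (f.appLE U V e).hom.FiniteType := LocallyOfFiniteType.finiteType_appLE f hU hV e
  obtain ⟨q, _, hq, -, -⟩ := fromSpec_lift_chain hV (GChain.refl w) hwV
  have hcl : IsClosed ((hV.fromSpec) ⁻¹' W : Set (PrimeSpectrum Γ(P, V))) :=
    hW.preimage hV.fromSpec.continuous
  obtain ⟨I, hI⟩ := (PrimeSpectrum.isClosed_iff_zeroLocus_ideal _).mp hcl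
  let φ := (Ideal.Quotient.mk I).comp (f.appLE U V e).hom
  have hφ : φ.FinitePresentation := by
    rw [← RingHom.FinitePresentation.of_finiteType]
    exact hft.comp_surjective Ideal.Quotient.mk_surjective
  have hcons := PrimeSpectrum.isConstructible_range_comap hφ
  have hrange : Set.range (PrimeSpectrum.comap φ) =
      PrimeSpectrum.comap (f.appLE U V e).hom '' (hV.fromSpec ⁻¹' W) := by
    have h1 := _root_.range_comap_of_surjective _ (Ideal.Quotient.mk I) Ideal.Quotient.mk_surjective
    rw [Ideal.mk_ker] at h1
    rw [hI, ← h1, ← Set.range_comp]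
    rfl
  set η := PrimeSpectrum.comap (f.appLE U V e).hom q with hη
  have hηg : hU.fromSpec η = genericPoint X := by rw [key, hq, hfw]
  have hcl' : closure {η} = Set.univ := by
    ext z
    simp only [Set.mem_univ, iff_true]
    rw [← specializes_iff_mem_closure]
    refine (hU.fromSpec.isOpenEmbedding.isInducing.specializes_iff (x := η) (y := z)).mp ?_
    rw [hηg]
    exact genericPoint_specializes _
  have hmem : η ∈ Set.range (PrimeSpectrum.comap φ) := by
    rw [hrange]
    exact ⟨q, show hV.fromSpec q ∈ W by rw [hq]; exact hw, rfl⟩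
  obtain ⟨O, hO, hηO, hsub⟩ := (constructible_generic η hcl' _ hcons).1 hmem
  refine ⟨hU.fromSpec '' O, hU.fromSpec.isOpenEmbedding.isOpenMap _ hO, ⟨_, η, hηO, rfl⟩, ?_⟩
  rintro _ ⟨z, hz, rfl⟩
  have := hsub hz
  rw [hrange] at this
  obtain ⟨r, hr, rfl⟩ := this
  exact ⟨hV.fromSpec r, hr, (key r).symm⟩

lemma move_chain {k : Type v} [Field k] {X : Scheme.{v}} (f : X ⟶ Spec (CommRingCat.of k))
    [LocallyOfFiniteType f] (η : X) {U : X.Opens} (hU : IsAffineOpen U) {z z0 y : X} {n : ℕ}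
    (hz : z ∈ U) (hz0 : z0 ∈ U) (hcl : IsClosed {z0}) (hηz0 : η ⤳ z0) (h : GChain z y n)
    (hy : η ⤳ y) : ∃ y', η ⤳ y' ∧ GChain z0 y' n := by
  have hind := hU.fromSpec.isOpenEmbedding.isInducing
  obtain ⟨a, b, ha, hb, hc⟩ := fromSpec_lift_chain hU h hz
  obtain ⟨m, _, hm, -, -⟩ := fromSpec_lift_chain hU (GChain.refl z0) hz0
  obtain ⟨e, _, he, -, -⟩ := fromSpec_lift_chain hU (GChain.refl η) (hηz0.mem_open U.2 hz0)
  have hem : e ⤳ m := (hind.specializes_iff (x := e) (y := m)).mp (by rw [he, hm]; exact hηz0)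
  have heb : e ⤳ b := (hind.specializes_iff (x := e) (y := b)).mp (by rw [he, hb]; exact hy)
  have hmcl : IsClosed ({m} : Set (PrimeSpectrum Γ(X, U))) := by
    have h1 : IsClosed (hU.fromSpec ⁻¹' {z0} : Set (Spec Γ(X, U))) :=
      hcl.preimage hU.fromSpec.continuous
    have h2 : ({m} : Set (PrimeSpectrum Γ(X, U))) =
        (hU.fromSpec ⁻¹' {z0} : Set (Spec Γ(X, U))) := by
      apply Set.Subset.antisymm
      · rintro t rfl; exact hm
      · intro t ht
        exact hU.fromSpec.isOpenEmbedding.injective ((show hU.fromSpec t = z0 from ht).trans hm.symm)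
    exact h2 ▸ h1
  let φ := Spec.preimage (hU.fromSpec ≫ f)
  have hφ : φ.hom.FiniteType := by
    have : LocallyOfFiniteType (Spec.map φ) := by
      rw [Spec.map_preimage]; infer_instance
    exact (HasRingHomProperty.Spec_iff (P := @LocallyOfFiniteType)).mp this
  let alg : Algebra k Γ(X, U) := φ.hom.toAlgebra
  have hft : Algebra.FiniteType k Γ(X, U) := hφ
  let B := Γ(X, U) ⧸ e.asIdeal
  have hftB : Algebra.FiniteType k B :=
    Algebra.FiniteType.of_surjective (Ideal.Quotient.mkₐ k e.asIdeal)
      (Ideal.Quotient.mkₐ_surjective k e.asIdeal)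
  have hemb := PrimeSpectrum.isClosedEmbedding_comap_of_surjective B (Ideal.Quotient.mk e.asIdeal)
    Ideal.Quotient.mk_surjective
  have h1 := _root_.range_comap_of_surjective B (Ideal.Quotient.mk e.asIdeal)
    Ideal.Quotient.mk_surjective
  rw [Ideal.mk_ker] at h1
  have hmem : ∀ t, e ⤳ t ↔ t ∈ Set.range (PrimeSpectrum.comap (Ideal.Quotient.mk e.asIdeal)) := by
    intro t
    rw [h1, ← PrimeSpectrum.le_iff_specializes, PrimeSpectrum.mem_zeroLocus]
    rfl
  obtain ⟨b', hb'⟩ := (hmem b).mp heb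
  obtain ⟨m', hm'⟩ := (hmem m).mp hem
  obtain ⟨a', ha', hc'⟩ := GChain.comap hemb.isInducing (range_comap_quotient_spec e.asIdeal) hc hb'
  have hm'cl : IsClosed ({m'} : Set (PrimeSpectrum B)) := by
    have h2 := hmcl.preimage hemb.continuous
    convert h2 using 1
    ext t
    constructor
    · rintro rfl; exact hm'
    · intro ht
      exact hemb.injective (Eq.trans ht hm'.symm)
  have hmax : m'.asIdeal.IsMaximal := (PrimeSpectrum.isClosed_singleton_iff_isMaximal m').mp hm'cl
  have hle : (n : ℕ∞) ≤ m'.asIdeal.height := by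
    have i1 := hc'.le_height
    have i2 := Ideal.height_le_ringKrullDim_of_ne_top a'.2.ne_top
    have i3 := ringKrullDim_le_height_maximal (k := k) m'.asIdeal
    have i4 : ((n : ℕ∞) : WithBot ℕ∞) ≤ (m'.asIdeal.height : WithBot ℕ∞) :=
      (WithBot.coe_le_coe.mpr i1).trans (i2.trans i3)
    exact WithBot.coe_le_coe.mp i4
  obtain ⟨q, hq⟩ := GChain.exists_of_le_height m' hle
  refine ⟨hU.fromSpec (PrimeSpectrum.comap (Ideal.Quotient.mk e.asIdeal) q), ?_, ?_⟩
  · rw [← he]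
    exact ((hmem _).mpr ⟨q, rfl⟩).map hU.fromSpec.continuous
  · rw [← hm, ← hm']
    exact fromSpec_map_chain hU (hq.map hemb.continuous hemb.injective)

lemma subtype_chain {T : Type*} [TopologicalSpace T] {Y : Set T} (hY : IsClosed Y) {x y : T} {n : ℕ}
    (h : GChain x y n) (hy : y ∈ Y) : ∃ a b : Y, a.1 = x ∧ b.1 = y ∧ GChain a b n := by
  obtain ⟨a, ha, hc⟩ := GChain.comap (f := (Subtype.val : Y → T)) IsInducing.subtypeVal
    (fun u v hu huv => by
      rw [Subtype.range_coe] at hu ⊢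
      exact huv.mem_closed hY hu) h (b := ⟨y, hy⟩) rfl
  exact ⟨a, ⟨y, hy⟩, ha, rfl, hc⟩

lemma dim_eq_of_bound {T : Type*} [TopologicalSpace T] [T0Space T] [QuasiSober T] (N : ℕ)
    (hN : ∀ (x y : T) n, GChain x y n → n ≤ N) (hne : ∃ x y : T, GChain x y N) :
    topologicalKrullDim T = N := by
  obtain ⟨x, y, h⟩ := hne
  refine le_antisymm ?_ h.le_dim
  by_contra hlt
  have h1 : ((N + 1 : ℕ) : WithBot ℕ∞) ≤ topologicalKrullDim T := by
    rw [not_le] at hlt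
    generalize topologicalKrullDim T = d at hlt ⊢
    induction d using WithBot.recBotCoe with
    | bot => exact absurd hlt (by simp)
    | coe d =>
      have h2 : (N : ℕ∞) < d := WithBot.coe_lt_coe.mp hlt
      have h3 : ((N + 1 : ℕ) : ℕ∞) ≤ d := by
        push_cast
        exact Order.add_one_le_of_lt h2
      exact WithBot.coe_le_coe.mpr h3
  obtain ⟨x, y, h⟩ := GChain.exists_of_le_dim h1
  have := hN x y _ h
  omega

lemma exists_max_chain {T : Type*} [TopologicalSpace T] (x : T) (p : T → Prop) (hx : p x) (N : ℕ)
    (hN : ∀ y n, p y → GChain x y n → n ≤ N) :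
    ∃ M y, p y ∧ GChain x y M ∧ ∀ y n, p y → GChain x y n → n ≤ M := by
  classical
  let s : Set ℕ := {n | ∃ y, p y ∧ GChain x y n}
  have hne : s.Nonempty := ⟨0, x, hx, GChain.refl x⟩
  have hbd : BddAbove s := ⟨N, fun n ⟨y, h1, h2⟩ => hN y n h1 h2⟩
  obtain ⟨y, h1, h2⟩ := Nat.sSup_mem hne hbd
  exact ⟨sSup s, y, h1, h2, fun y n a b => le_csSup hbd ⟨y, a, b⟩⟩

lemma exists_point_of_dim {k : Type v} [Field k] {X : Scheme.{v}} (f : X ⟶ Spec (CommRingCat.of k))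
    [LocallyOfFiniteType f] {Y O : Set X} (hY : IsClosed Y) (hYi : IsIrreducible Y) (hO : IsOpen O)
    (hne : (Y ∩ O).Nonempty) :
    ∃ (y0 y1 : X) (N : ℕ), y0 ∈ Y ∩ O ∧ IsClosed {y0} ∧ y1 ∈ Y ∧ GChain y0 y1 N ∧
      topologicalKrullDim Y = N := by
  have : IsLocallyNoetherian X := LocallyOfFiniteType.isLocallyNoetherian f
  have : JacobsonSpace X := LocallyOfFiniteType.jacobsonSpace f
  obtain ⟨η, hη⟩ := QuasiSober.sober hYi hY
  have hηY : ∀ y, η ⤳ y ↔ y ∈ Y := fun y => by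
    rw [specializes_iff_mem_closure, hη.def]
  have hηmem : η ∈ Y := (hηY η).mp specializes_rfl
  have hηopen : ∀ V : Set X, IsOpen V → (Y ∩ V).Nonempty → η ∈ V := by
    rintro V hV ⟨t, ht1, ht2⟩
    exact ((hηY t).mpr ht1).mem_open hV ht2
  obtain ⟨U0, hU0, hηU0, -⟩ := exists_isAffineOpen_mem_and_subset (x := η) (U := ⊤) trivial
  have hηO : η ∈ O := hηopen O hO hne
  obtain ⟨zs, ⟨hzs1, hzs2, hzs3⟩, hzscl⟩ : ((Y ∩ (O ∩ U0)) ∩ closedPoints X).Nonempty := by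
    refine nonempty_inter_closedPoints ⟨η, hηmem, hηO, hηU0⟩ ?_
    exact hY.isLocallyClosed.inter (hO.inter U0.2).isLocallyClosed
  obtain ⟨N0, hN0⟩ := chain_bounded zs
  obtain ⟨N, y1, hy1, hc, hmax⟩ := exists_max_chain zs (· ∈ Y) hzs1 N0 (fun y n _ h => hN0 y n h)
  refine ⟨zs, y1, N, ⟨hzs1, hzs2⟩, hzscl, hy1, hc, ?_⟩
  have hqs : QuasiSober Y := hY.isClosedEmbedding_subtypeVal.quasiSober
  refine dim_eq_of_bound N ?_ ?_
  · intro x y n h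
    have h' := h.map (f := (Subtype.val : Y → X)) continuous_subtype_val Subtype.val_injective
    obtain ⟨U, hU, hxU, -⟩ := exists_isAffineOpen_mem_and_subset (x := x.1) (U := ⊤) trivial
    obtain ⟨z0, ⟨hz1, hz2, hz3⟩, hzcl⟩ : ((Y ∩ (U ∩ U0 : Set X)) ∩ closedPoints X).Nonempty := by
      refine nonempty_inter_closedPoints ⟨η, hηmem, hηopen U U.2 ⟨x.1, x.2, hxU⟩, hηU0⟩ ?_
      exact hY.isLocallyClosed.inter (U.2.inter U0.2).isLocallyClosed
    obtain ⟨y', hy', hc'⟩ := move_chain f η hU hxU hz2 hzcl ((hηY _).mpr hz1) h' ((hηY _).mpr y.2)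
    obtain ⟨y'', hy'', hc''⟩ := move_chain f η hU0 hz3 hzs3 hzscl ((hηY _).mpr hzs1) hc' hy'
    exact hmax y'' n ((hηY _).mp hy'') hc''
  · obtain ⟨a, b, -, -, hab⟩ := subtype_chain hY hc hy1
    exact ⟨a, b, hab⟩

end Schemes

section Action

open TopologicalSpace Topology

namespace SchemeGroupAction

section General

variable {S G X : Scheme.{u}} (D : SchemeGroupAction S G X)

lemma comp_mulElt {W W' : Scheme.{u}} (φ : W' ⟶ W) (g h : W ⟶ G) (hgh : g ≫ D.p = h ≫ D.p) :
    φ ≫ D.mulElt g h hgh = D.mulElt (φ ≫ g) (φ ≫ h) (by simp [hgh]) := by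
  rw [mulElt, mulElt, ← Category.assoc]
  congr 1
  ext <;> simp [pullback.lift_fst, pullback.lift_snd, pullback.lift_fst_assoc, pullback.lift_snd_assoc]

lemma comp_actElt {W W' : Scheme.{u}} (φ : W' ⟶ W) (g : W ⟶ G) (x : W ⟶ X)
    (hgx : g ≫ D.p = x ≫ D.q) :
    φ ≫ D.actElt g x hgx = D.actElt (φ ≫ g) (φ ≫ x) (by simp [hgx]) := by
  rw [actElt, actElt, ← Category.assoc]
  congr 1
  ext <;> simp [pullback.lift_fst, pullback.lift_snd, pullback.lift_fst_assoc, pullback.lift_snd_assoc]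

lemma mulElt_congr {W : Scheme.{u}} {g h g' h' : W ⟶ G} (hgh : g ≫ D.p = h ≫ D.p)
    (hg : g = g') (hh : h = h') : D.mulElt g h hgh = D.mulElt g' h' (by rw [← hg, ← hh, hgh]) := by
  subst hg hh; rfl

lemma actElt_congr {W : Scheme.{u}} {g g' : W ⟶ G} {x x' : W ⟶ X} (hgx : g ≫ D.p = x ≫ D.q)
    (hg : g = g') (hx : x = x') : D.actElt g x hgx = D.actElt g' x' (by rw [← hg, ← hx, hgx]) := by
  subst hg hx; rfl

lemma act_eq : D.act = D.actElt (pullback.fst D.p D.q) (pullback.snd D.p D.q)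
    pullback.condition := by
  rw [actElt]
  have : pullback.lift (pullback.fst D.p D.q) (pullback.snd D.p D.q) pullback.condition = 𝟙 _ := by
    ext <;> simp [pullback.lift_fst, pullback.lift_snd, pullback.lift_fst_assoc, pullback.lift_snd_assoc]
  rw [this, Category.id_comp]

lemma act_inv_act (hD : D.IsGroupAction) {W : Scheme.{u}} (g : W ⟶ G) (x : W ⟶ X) (h : g ≫ D.p = x ≫ D.q) :
    D.actElt g (D.actElt (g ≫ D.inv) x (by rw [Category.assoc, D.inv_over, h]))
      (by rw [D.actElt_over, h]) = x := by
  rw [← hD.act_assoc W (g ≫ D.p) g (g ≫ D.inv) x rfl (by rw [Category.assoc, D.inv_over]) h.symm]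
  rw [D.actElt_congr _ ((hD.mul_inv W g).trans
    (by rw [← Category.assoc, h, Category.assoc])) rfl]
  exact hD.one_act W x

lemma inv_act_act (hD : D.IsGroupAction) {W : Scheme.{u}} (g : W ⟶ G) (x : W ⟶ X) (h : g ≫ D.p = x ≫ D.q) :
    D.actElt (g ≫ D.inv) (D.actElt g x h)
      (by rw [D.actElt_over, Category.assoc, D.inv_over, h]) = x := by
  rw [← hD.act_assoc W (g ≫ D.p) (g ≫ D.inv) g x (by rw [Category.assoc, D.inv_over]) rfl h.symm]
  rw [D.actElt_congr _ ((hD.inv_mul W g).trans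
    (by rw [← Category.assoc, h, Category.assoc])) rfl]
  exact hD.one_act W x

lemma e_inv (hD : D.IsGroupAction) : D.e ≫ D.inv = D.e := by
  have h1 := hD.mul_inv S D.e
  have h2 := hD.one_mul S (D.e ≫ D.inv)
  have h3 : (D.e ≫ D.inv) ≫ D.p ≫ D.e = D.e := by
    rw [Category.assoc, ← Category.assoc D.inv, D.inv_over, ← Category.assoc, D.e_sec,
      Category.id_comp]
  rw [← h2, D.mulElt_congr _ h3 rfl, h1, ← Category.assoc, D.e_sec, Category.id_comp]

/-- The shear map is an isomorphism. -/
lemma isIso_shear (hD : D.IsGroupAction) : IsIso (pullback.lift (pullback.fst D.p D.q) D.act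
    (by rw [D.act_over, pullback.condition])) := by
  refine ⟨pullback.lift (pullback.fst D.p D.q)
    (D.actElt (pullback.fst D.p D.q ≫ D.inv) (pullback.snd D.p D.q)
      (by rw [Category.assoc, D.inv_over, pullback.condition]))
    (by rw [D.actElt_over, pullback.condition]), ?_, ?_⟩
  · ext
    · simp [pullback.lift_fst, pullback.lift_snd, pullback.lift_fst_assoc, pullback.lift_snd_assoc]
    · rw [Category.assoc, pullback.lift_snd, comp_actElt]
      rw [D.actElt_congr _ (by rw [← Category.assoc, pullback.lift_fst])
        ((pullback.lift_snd _ _ _).trans D.act_eq)]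
      rw [D.inv_act_act hD, Category.id_comp]
  · ext
    · simp [pullback.lift_fst, pullback.lift_snd, pullback.lift_fst_assoc, pullback.lift_snd_assoc]
    · rw [Category.assoc, pullback.lift_snd]
      conv_lhs => rw [D.act_eq]
      rw [comp_actElt]
      rw [D.actElt_congr _ (pullback.lift_fst _ _ _) (pullback.lift_snd _ _ _)]
      rw [D.act_inv_act hD _ _ pullback.condition, Category.id_comp]

lemma flat_act (hD : D.IsGroupAction) [Flat D.p] : Flat D.act := by
  have := D.isIso_shear hD
  have h : D.act = pullback.lift (pullback.fst D.p D.q) D.act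
    (by rw [D.act_over, pullback.condition]) ≫ pullback.snd D.p D.q :=
    (pullback.lift_snd _ _ _).symm
  rw [h]
  infer_instance

lemma left_translate (hD : D.IsGroupAction) (g : S ⟶ G) (hg : g ≫ D.p = 𝟙 S) : ∃ L L' : G ⟶ G, L ≫ L' = 𝟙 G ∧
    g ≫ L = D.e := by
  have c1 : (D.p ≫ g ≫ D.inv) ≫ D.p = 𝟙 G ≫ D.p := by simp [D.inv_over, hg]
  have c2 : (D.p ≫ g) ≫ D.p = 𝟙 G ≫ D.p := by simp [hg]
  refine ⟨D.mulElt (D.p ≫ g ≫ D.inv) (𝟙 G) c1, D.mulElt (D.p ≫ g) (𝟙 G) c2, ?_, ?_⟩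
  · rw [comp_mulElt]
    have e1 : D.mulElt (D.p ≫ g ≫ D.inv) (𝟙 G) c1 ≫ D.p ≫ g = D.p ≫ g := by
      rw [← Category.assoc, D.mulElt_over, c1, Category.id_comp]
    rw [D.mulElt_congr _ e1 (Category.comp_id _)]
    rw [← hD.mul_assoc G D.p (D.p ≫ g) (D.p ≫ g ≫ D.inv) (𝟙 G) (by simp [hg])
      (by simp [hg, D.inv_over]) (by simp)]
    have e2 := hD.mul_inv G (D.p ≫ g)
    have e3 : (D.p ≫ g) ≫ D.p ≫ D.e = 𝟙 G ≫ D.p ≫ D.e := by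
      rw [← Category.assoc, c2, Category.assoc]
    rw [D.mulElt_congr _ ((D.mulElt_congr _ rfl (Category.assoc _ _ _).symm).trans
      (e2.trans e3)) rfl]
    exact hD.one_mul G (𝟙 G)
  · rw [comp_mulElt]
    have e1 : g ≫ D.p ≫ g ≫ D.inv = g ≫ D.inv := by
      rw [← Category.assoc, hg, Category.id_comp]
    rw [D.mulElt_congr _ e1 (Category.comp_id _), hD.inv_mul, ← Category.assoc, hg,
      Category.id_comp]

/-- The map `g ↦ (g, g⁻¹ y)`. -/
lemma exists_iota (hD : D.IsGroupAction) (y : S ⟶ X) (hy : y ≫ D.q = 𝟙 S) : ∃ ι : G ⟶ pullback D.p D.q,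
    ι ≫ pullback.fst D.p D.q = 𝟙 G ∧ ι ≫ D.act = D.p ≫ y ∧
    D.e ≫ ι = pullback.lift D.e y (by rw [D.e_sec, hy]) := by
  have c1 : (𝟙 G ≫ D.inv) ≫ D.p = (D.p ≫ y) ≫ D.q := by simp [D.inv_over, hy]
  have c2 : 𝟙 G ≫ D.p = (D.p ≫ y) ≫ D.q := by simp [hy]
  refine ⟨pullback.lift (𝟙 G) (D.actElt (𝟙 G ≫ D.inv) (D.p ≫ y) c1)
    (by rw [D.actElt_over, c2]), pullback.lift_fst _ _ _, ?_, ?_⟩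
  · exact D.act_inv_act hD (𝟙 G) (D.p ≫ y) c2
  · ext
    · simp [pullback.lift_fst, pullback.lift_snd, pullback.lift_fst_assoc, pullback.lift_snd_assoc]
    · rw [Category.assoc, pullback.lift_snd, pullback.lift_snd, comp_actElt]
      have e1 : D.e ≫ 𝟙 G ≫ D.inv = y ≫ D.q ≫ D.e := by
        rw [Category.id_comp, D.e_inv hD, ← Category.assoc, hy, Category.id_comp]
      have e2 : D.e ≫ D.p ≫ y = y := by rw [← Category.assoc, D.e_sec, Category.id_comp]
      rw [D.actElt_congr _ e1 e2]
      exact hD.one_act S y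

end General

section Fibre

variable {S G X : Scheme.{u}} (D : SchemeGroupAction S G X)

/-- The inclusion `g ↦ (g, y)` of the fibre over `y`. -/
noncomputable def fibreIncl (y : S ⟶ X) (hy : y ≫ D.q = 𝟙 S) : G ⟶ pullback D.p D.q :=
  pullback.lift (𝟙 G) (D.p ≫ y) (by rw [Category.id_comp, Category.assoc, hy, Category.comp_id])

variable (y : S ⟶ X) (hy : y ≫ D.q = 𝟙 S)

lemma fibreIncl_fst : D.fibreIncl y hy ≫ pullback.fst D.p D.q = 𝟙 G := pullback.lift_fst _ _ _

lemma fibreIncl_snd : D.fibreIncl y hy ≫ pullback.snd D.p D.q = D.p ≫ y :=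
  pullback.lift_snd _ _ _

lemma fibreIncl_act : D.fibreIncl y hy ≫ D.act = D.actElt (𝟙 G) (D.p ≫ y)
    (by rw [Category.id_comp, Category.assoc, hy, Category.comp_id]) := rfl

lemma isPullback_fibreIncl : IsPullback (D.fibreIncl y hy) D.p (pullback.snd D.p D.q) y := by
  refine IsPullback.of_right ?_ (D.fibreIncl_snd y hy) (IsPullback.of_hasPullback D.p D.q)
  rw [fibreIncl_fst, hy]
  exact IsPullback.of_horiz_isIso ⟨by simp⟩

lemma mem_range_fibreIncl (w : (pullback D.p D.q : Scheme.{u})) (s : S)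
    (hw : pullback.snd D.p D.q w = y s) : ∃ g, D.fibreIncl y hy g = w := by
  have h := D.isPullback_fibreIncl y hy
  obtain ⟨t, ht1, ht2⟩ := Scheme.Pullback.exists_preimage_pullback w s hw
  refine ⟨h.isoPullback.inv t, ?_⟩
  rw [← Scheme.Hom.comp_apply, h.isoPullback_inv_fst, ht1]

lemma isEmbedding_fibreIncl : IsEmbedding (D.fibreIncl y hy) := by
  have h1 : Function.LeftInverse (pullback.fst D.p D.q) (D.fibreIncl y hy) := by
    intro g
    rw [← Scheme.Hom.comp_apply, fibreIncl_fst]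
    rfl
  exact h1.isEmbedding (pullback.fst D.p D.q).continuous (D.fibreIncl y hy).continuous

end Fibre

end SchemeGroupAction

lemma exists_dim_group {k : Type u} [Field k] [IsAlgClosed k] {G X : Scheme.{u}}
    (D : SchemeGroupAction (Spec (CommRingCat.of k)) G X) (hD : D.IsGroupAction)
    [LocallyOfFiniteType D.p] (s : Spec (CommRingCat.of k)) :
    ∃ (N : ℕ) (g1 : G), GChain (D.e s) g1 N ∧ topologicalKrullDim G = N := by
  have : IsLocallyNoetherian G := LocallyOfFiniteType.isLocallyNoetherian D.p
  have : JacobsonSpace G := LocallyOfFiniteType.jacobsonSpace D.p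
  obtain ⟨N0, hN0⟩ := chain_bounded (D.e s)
  obtain ⟨N, g1, -, hc, hmax⟩ := exists_max_chain (D.e s) (fun _ => True) trivial N0
    (fun y n _ h => hN0 y n h)
  refine ⟨N, g1, hc, dim_eq_of_bound N ?_ ⟨_, _, hc⟩⟩
  intro x y n h
  obtain ⟨x0, hx0, hx0cl⟩ : (closure {x} ∩ closedPoints G).Nonempty :=
    nonempty_inter_closedPoints ⟨x, subset_closure rfl⟩ isClosed_closure.isLocallyClosed
  obtain ⟨m, hm, hc'⟩ := h.exists_le (specializes_iff_mem_closure.mpr hx0)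
  obtain ⟨L, L', hL, hLe⟩ := D.left_translate hD (pointOfClosedPoint D.p x0 hx0cl)
    (pointOfClosedPoint_comp D.p x0 hx0cl)
  have hinj : Function.Injective L := by
    have : Function.LeftInverse L' L := by
      intro t
      rw [← Scheme.Hom.comp_apply, hL]
      rfl
    exact this.injective
  have hLx : L x0 = D.e s := by
    rw [← hLe, Scheme.Hom.comp_apply]
    exact congrArg L (pointOfClosedPoint_apply D.p x0 hx0cl s).symm
  have := hc'.map L.continuous hinj
  rw [hLx] at this
  exact hm.trans (hmax _ _ trivial this)

lemma isClosed_range_point {k : Type u} [Field k] [IsAlgClosed k] {X : Scheme.{u}}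
    (f : X ⟶ Spec (CommRingCat.of k)) [LocallyOfFiniteType f]
    (y : Spec (CommRingCat.of k) ⟶ X) (hy : y ≫ f = 𝟙 _) (s : Spec (CommRingCat.of k)) :
    IsClosed {y s} := by
  have h := ((pointEquivClosedPoint f) ⟨y, hy⟩).2
  have h2 : s = IsLocalRing.closedPoint k := Subsingleton.elim _ _
  rw [h2]
  exact h

lemma exists_orbit_point {k : Type u} [Field k] [IsAlgClosed k] {G X : Scheme.{u}}
    (D : SchemeGroupAction (Spec (CommRingCat.of k)) G X) (hD : D.IsGroupAction)
    [LocallyOfFiniteType D.p] (Y : Set X) (hYcl : IsClosed Y)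
    (x : Spec (CommRingCat.of k) ⟶ X) (hx : x ≫ D.q = 𝟙 _) (s0 : Spec (CommRingCat.of k))
    (hxV : x s0 ∈ pullback.snd D.p D.q '' (D.act ⁻¹' Y)) :
    ∃ (g : Spec (CommRingCat.of k) ⟶ G) (hg : g ≫ D.p = 𝟙 _)
          (y : Spec (CommRingCat.of k) ⟶ X) (hy : y ≫ D.q = 𝟙 _),
          (∀ s, y.base s ∈ Y) ∧ D.actElt g y (by rw [hg, hy]) = x := by
  have : JacobsonSpace G := LocallyOfFiniteType.jacobsonSpace D.p
  obtain ⟨w, hwY, hwx⟩ := hxV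
  obtain ⟨g', rfl⟩ := D.mem_range_fibreIncl x hx w s0 hwx
  have hcl : IsClosed ((D.fibreIncl x hx ≫ D.act) ⁻¹' Y) :=
    hYcl.preimage (D.fibreIncl x hx ≫ D.act).continuous
  obtain ⟨g0, hg0, hg0cl⟩ : (((D.fibreIncl x hx ≫ D.act) ⁻¹' Y) ∩ closedPoints G).Nonempty := by
    refine nonempty_inter_closedPoints ⟨g', ?_⟩ hcl.isLocallyClosed
    rw [Set.mem_preimage, Scheme.Hom.comp_apply]
    exact hwY
  let g := pointOfClosedPoint D.p g0 hg0cl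
  have hg : g ≫ D.p = 𝟙 _ := pointOfClosedPoint_comp D.p g0 hg0cl
  refine ⟨g ≫ D.inv, by rw [Category.assoc, D.inv_over, hg], D.actElt g x (by rw [hg, hx]),
    by rw [D.actElt_over, hx], ?_, D.inv_act_act hD g x (by rw [hg, hx])⟩
  intro s
  have e1 : D.actElt g x (by rw [hg, hx]) = g ≫ D.fibreIncl x hx ≫ D.act := by
    rw [D.fibreIncl_act, D.comp_actElt]
    refine D.actElt_congr _ (Category.comp_id _).symm ?_
    rw [← Category.assoc, hg, Category.id_comp]
  have e2 : (D.actElt g x (by rw [hg, hx])) s = (D.fibreIncl x hx ≫ D.act) g0 := by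
    rw [e1, Scheme.Hom.comp_apply]
    exact congrArg _ (pointOfClosedPoint_apply D.p g0 hg0cl s)
  change (D.actElt g x (by rw [hg, hx])) s ∈ Y
  rw [e2]
  exact hg0

lemma fibre_bound {k : Type u} [Field k] [IsAlgClosed k] {G X : Scheme.{u}}
    (D : SchemeGroupAction (Spec (CommRingCat.of k)) G X)
    [LocallyOfFiniteType D.q] (Y : Set X) (hYcl : IsClosed Y)
    (y : Spec (CommRingCat.of k) ⟶ X) (hy : y ≫ D.q = 𝟙 _) (s0 : Spec (CommRingCat.of k))
    (w w' : (pullback D.p D.q : Scheme.{u})) (b : ℕ) (h : GChain w w' b)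
    (hw' : D.act w' ∈ Y) (hsnd : pullback.snd D.p D.q w' = y s0) :
    (b : WithBot ℕ∞) ≤ topologicalKrullDim ↥((D.actElt (𝟙 G) (D.p ≫ y)
              (by rw [Category.id_comp, Category.assoc, hy, Category.comp_id])).base ⁻¹' Y) := by
  obtain ⟨g', hg'⟩ := D.mem_range_fibreIncl y hy w' s0 hsnd
  have hycl := isClosed_range_point D.q y hy s0
  obtain ⟨g, hg, hc⟩ := GChain.comap (D.isEmbedding_fibreIncl y hy).isInducing (by
    rintro _ v ⟨t, rfl⟩ huv
    refine D.mem_range_fibreIncl y hy v s0 ?_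
    have h1 := huv.map (pullback.snd D.p D.q).continuous
    rw [← Scheme.Hom.comp_apply, D.fibreIncl_snd, Scheme.Hom.comp_apply,
      Subsingleton.elim (D.p t) s0] at h1
    exact h1.mem_closed hycl rfl) h hg'
  have hcl : IsClosed ((D.actElt (𝟙 G) (D.p ≫ y)
              (by rw [Category.id_comp, Category.assoc, hy, Category.comp_id])).base ⁻¹' Y) :=
    hYcl.preimage (Scheme.Hom.continuous _)
  have hmem : g' ∈ ((D.actElt (𝟙 G) (D.p ≫ y)
              (by rw [Category.id_comp, Category.assoc, hy, Category.comp_id])).base ⁻¹' Y) := by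
    change (D.fibreIncl y hy ≫ D.act) g' ∈ Y
    rw [Scheme.Hom.comp_apply, hg']
    exact hw'
  obtain ⟨a, b, -, -, hab⟩ := subtype_chain hcl hc hmem
  exact hab.le_dim

lemma exists_long_chain {k : Type u} [Field k] [IsAlgClosed k] {G X : Scheme.{u}}
    (D : SchemeGroupAction (Spec (CommRingCat.of k)) G X) (hD : D.IsGroupAction)
    (y : Spec (CommRingCat.of k) ⟶ X) (hy : y ≫ D.q = 𝟙 _) (s0 : Spec (CommRingCat.of k))
    (g1 : G) (NG : ℕ) (hG : GChain (D.e s0) g1 NG) (y1 : X) (NY : ℕ) (hY : GChain (y s0) y1 NY) :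
    ∃ w0 w1 : (pullback D.p D.q : Scheme.{u}), GChain w0 w1 (NG + NY) ∧
      pullback.snd D.p D.q w0 = y s0 ∧ D.act w1 = y1 := by
  obtain ⟨ι, h1, h2, h3⟩ := D.exists_iota hD y hy
  have hflat : Flat D.act := D.flat_act hD
  have hinj : Function.Injective ι := by
    have : Function.LeftInverse (pullback.fst D.p D.q) ι := by
      intro t
      rw [← Scheme.Hom.comp_apply, h1]
      rfl
    exact this.injective
  have hc1 := hG.map ι.continuous hinj
  have hact : D.act (ι g1) = y s0 := by
    rw [← Scheme.Hom.comp_apply, h2, Scheme.Hom.comp_apply, Subsingleton.elim (D.p g1) s0]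
  obtain ⟨w1, hw1, hc2⟩ := hY.lift (Flat.generalizingMap D.act) hact
  refine ⟨_, w1, hc1.trans hc2, ?_, hw1⟩
  have h4 : ι (D.e s0) = pullback.lift D.e y (by rw [D.e_sec, hy]) s0 := by
    rw [← Scheme.Hom.comp_apply, h3]
  rw [h4, ← Scheme.Hom.comp_apply, pullback.lift_snd]

end Action

/-- Let `G` be an algebraic group over an algebraically closed field `k`
acting on an irreducible `k`-variety `X` (schemes of finite type over `S = Spec k`; points
of varieties are identified with `k`-points, i.e. sections of the structure morphisms).
Let `Y ⊆ X` be an irreducible closed subvariety, and for a `k`-point `y` of `X` let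
`H(y) = {g ∈ G | g·y ∈ Y}` (the preimage of `Y` under `g ↦ g·y`).  Suppose there is a
nonempty relatively open `U ⊆ Y` such that for every `k`-point `y` of `U`,
`dim H(y) = dim Y + dim G − dim X` (stated additively as
`dim H(y) + dim X = dim Y + dim G` in `WithBot ℕ∞`).  Then there is a nonempty open
`V ⊆ X` such that every `k`-point of `V` lies in the `G`-orbit of a `k`-point of `Y`. -/
theorem stmt_4 (k : Type u) [Field k] [IsAlgClosed k]
    (G X : Scheme.{u}) (D : SchemeGroupAction (Spec (CommRingCat.of k)) G X)
    (hD : D.IsGroupAction)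
    [IrreducibleSpace X] [IsReduced X] [IsReduced G]
    (hGft : LocallyOfFiniteType D.p) (hXft : LocallyOfFiniteType D.q)
    (Y : Set X) (hYcl : IsClosed Y) (hYirr : IsIrreducible Y)
    (U : Set X) (hUY : U ⊆ Y) (hUne : U.Nonempty)
    (hUopen : ∃ O : Set X, IsOpen O ∧ U = Y ∩ O)
    (hdim : ∀ (y : Spec (CommRingCat.of k) ⟶ X) (hy : y ≫ D.q = 𝟙 _),
      (∀ s, y.base s ∈ U) →
      topologicalKrullDim
          ↥((D.actElt (𝟙 G) (D.p ≫ y)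
              (by rw [Category.id_comp, Category.assoc, hy, Category.comp_id])).base ⁻¹' Y)
          + topologicalKrullDim X
        = topologicalKrullDim ↥Y + topologicalKrullDim G) :
    ∃ V : Set X, IsOpen V ∧ V.Nonempty ∧
      ∀ (x : Spec (CommRingCat.of k) ⟶ X), x ≫ D.q = 𝟙 _ → (∀ s, x.base s ∈ V) →
        ∃ (g : Spec (CommRingCat.of k) ⟶ G) (hg : g ≫ D.p = 𝟙 _)
          (y : Spec (CommRingCat.of k) ⟶ X) (hy : y ≫ D.q = 𝟙 _),
          (∀ s, y.base s ∈ Y) ∧ D.actElt g y (by rw [hg, hy]) = x := by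
  obtain ⟨O, hO, rfl⟩ := hUopen
  have : IsLocallyNoetherian X := LocallyOfFiniteType.isLocallyNoetherian D.q
  have : IsLocallyNoetherian (pullback D.p D.q) :=
    LocallyOfFiniteType.isLocallyNoetherian (pullback.snd D.p D.q ≫ D.q)
  let s0 : Spec (CommRingCat.of k) := IsLocalRing.closedPoint k
  obtain ⟨y0, y1, NY, hy0, hy0cl, hy1, hYc, hYdim⟩ := exists_point_of_dim D.q hYcl hYirr hO hUne
  obtain ⟨NG, g1, hGc, hGdim⟩ := exists_dim_group D hD s0
  let y := pointOfClosedPoint D.q y0 hy0cl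
  have hy : y ≫ D.q = 𝟙 _ := pointOfClosedPoint_comp D.q y0 hy0cl
  have hys : ∀ s, y s = y0 := pointOfClosedPoint_apply D.q y0 hy0cl
  have hH := hdim y hy (fun s => by
    have h1 := hys s
    change y s ∈ _
    rw [h1]
    exact hy0)
  rw [hYdim, hGdim] at hH
  obtain ⟨w0, w1, hc, hw0, hw1⟩ := exists_long_chain D hD y hy s0 g1 NG hGc y1 NY
    (by rw [hys]; exact hYc)
  have hgen : pullback.snd D.p D.q w1 = genericPoint X := by
    by_contra hne
    obtain ⟨a, b, hab, ⟨x', hx1, hx2⟩, ⟨w', hw'1, hw'2, hw'3⟩⟩ :=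
      scheme_dim_inequality (pullback.snd D.p D.q) hc
    have hne' : genericPoint X ≠ x' := by
      rintro rfl
      exact hne (hx2.antisymm (genericPoint_specializes _)).eq
    have i1 := (hx1.step (genericPoint_specializes x') hne').le_dim
    have hmem : D.act w' ∈ Y := (hw'2.map D.act.continuous).mem_closed hYcl (by rw [hw1]; exact hy1)
    have i2 := fibre_bound D Y hYcl y hy s0 w0 w' b hw'1 hmem (by rw [hw'3, hw0])
    have i3 := (add_le_add i2 i1).trans_eq hH
    have i4 : b + (a + 1) ≤ NY + NG := by exact_mod_cast i3
    omega
  obtain ⟨V, hV, hVne, hVsub⟩ := chevalley_generic (pullback.snd D.p D.q) (D.act ⁻¹' Y)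
    (hYcl.preimage D.act.continuous) w1 (by rw [Set.mem_preimage, hw1]; exact hy1) hgen
  exact ⟨V, hV, hVne, fun x hx hxV => exists_orbit_point D hD Y hYcl x hx s0 (hVsub (hxV s0))⟩
end

section
/- For p prime and n ≥ 2, define for 1 ≤ i ≤ n−1 the vector η_i' = (1,...,1, b',...,b') ∈ Q^n where 1 appears i times and b' = −(p^n − p^{n−i})/(p^{n−i} − 1) appears n−i times, and let η_ω = −(p−1)(1,...,1). Then: (a) each η_i' lies on the hyperplane Σ_{j=1}^n p^{n−j} a_j = 0; (b) (η_1', ..., η_{n−1}', η_ω) is a Q-basis of Q^n; (c) the cone C = {(a_1,...,a_n) ∈ Z^n : a_1 ≥ a_2 ≥ ... ≥ a_n and Σ_{j=1}^n p^{n−j} a_j ≤ 0} equals the set of λ ∈ Z^n expressible as a nonnegative rational combination of η_1', ..., η_{n−1}', η_ω. -/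
lemma core_aux {n : ℕ} (fam : Fin n → (Fin n → ℚ)) (φ : Fin n → ((Fin n → ℚ) →ₗ[ℚ] ℚ)) (d : Fin n → ℚ)
    (hd : ∀ i, 0 < d i) (hφ : ∀ i j, φ i (fam j) = if i = j then d i else 0)
    (inj : ∀ x, (∀ i, φ i x = 0) → x = 0) :
    (LinearIndependent ℚ fam ∧ Submodule.span ℚ (Set.range fam) = ⊤) ∧
    ∀ x : Fin n → ℚ, (∀ i, 0 ≤ φ i x) ↔ ∃ c : Fin n → ℚ, (∀ j, 0 ≤ c j) ∧ x = ∑ j, c j • fam j := by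
  have key : ∀ (c : Fin n → ℚ) i, φ i (∑ j, c j • fam j) = c i * d i := by
    intro c i
    simp [map_sum, hφ]
  have li : LinearIndependent ℚ fam := by
    rw [Fintype.linearIndependent_iff]
    intro g hg i
    have h := key g i
    rw [hg, map_zero] at h
    rcases mul_eq_zero.1 h.symm with h | h
    · exact h
    · exact absurd h (hd i).ne'
  refine ⟨⟨li, li.span_eq_top_of_card_eq_finrank' (by simp)⟩, fun x => ⟨fun h => ?_, ?_⟩⟩
  · refine ⟨fun i => φ i x / d i, fun i => div_nonneg (h i) (hd i).le, ?_⟩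
    rw [← sub_eq_zero]
    apply inj
    intro i
    rw [map_sub, key, div_mul_cancel₀ _ (hd i).ne', sub_self]
  · rintro ⟨c, hc, rfl⟩ i
    rw [key]
    exact mul_nonneg (hc i) (hd i).le

lemma geom_aux (q : ℚ) (n j : ℕ) (hj : j ≤ n) :
    (q - 1) * ∑ k ∈ Finset.range j, q ^ (n - 1 - k) = q ^ n - q ^ (n - j) := by
  induction j with
  | zero => simp
  | succ j ih =>
    rw [Finset.sum_range_succ, mul_add, ih (by omega)]
    have e1 : n - j = (n - 1 - j) + 1 := by omega
    have e2 : n - (j + 1) = n - 1 - j := by omega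
    rw [e1, e2]; ring

lemma split_aux (f : ℕ → ℚ) (b : ℚ) (i r : ℕ) :
    ∑ k ∈ Finset.range (i + r), f k * (if k < i then 1 else b) =
      ∑ k ∈ Finset.range i, f k
        + b * (∑ k ∈ Finset.range (i + r), f k - ∑ k ∈ Finset.range i, f k) := by
  induction r with
  | zero =>
    simp only [add_zero, sub_self, mul_zero]
    refine Finset.sum_congr rfl fun k hk => ?_
    rw [if_pos (Finset.mem_range.1 hk), mul_one]
  | succ r ih =>
    rw [← add_assoc, Finset.sum_range_succ, ih, Finset.sum_range_succ, if_neg (by omega)]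
    ring

lemma hyper_aux (q : ℚ) (hq : 1 < q) (n i : ℕ) (hi : i + 1 ≤ n) :
    ∑ k : Fin n, q ^ (n - 1 - (k : ℕ)) *
      (if (k : ℕ) < i then 1 else -((q ^ n - q ^ (n - i)) / (q ^ (n - i) - 1))) = 0 := by
  rw [Fin.sum_univ_eq_sum_range (fun k => q ^ (n - 1 - k) *
      (if k < i then 1 else -((q ^ n - q ^ (n - i)) / (q ^ (n - i) - 1)))) n]
  obtain ⟨r, rfl⟩ : ∃ r, n = i + r := ⟨n - i, by omega⟩
  rw [split_aux (fun k => q ^ (i + r - 1 - k))]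
  have h1 := geom_aux q (i + r) i (by omega)
  have h2 := geom_aux q (i + r) (i + r) le_rfl
  have hp : 1 < q ^ (i + r - i) := one_lt_pow₀ hq (by omega)
  have hne : q ^ (i + r - i) - 1 ≠ 0 := by linarith
  have hq1 : q - 1 ≠ 0 := by linarith
  rw [Nat.sub_self, pow_zero] at h2
  apply mul_left_cancel₀ hq1
  rw [mul_zero, mul_add, mul_left_comm, mul_sub, h1, h2]
  field_simp
  ring

/-- For `p` prime, `n ≥ 2`: (a) the vectors
`η'_i = (1,…,1, b',…,b')` (with `i` ones and `b' = −(pⁿ − p^{n−i})/(p^{n−i} − 1)`) lie on the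
hyperplane `∑_j p^{n−j} a_j = 0`; (b) `(η'_1, …, η'_{n−1}, η_ω)` with `η_ω = −(p−1,…,p−1)` is
a `ℚ`-basis of `ℚⁿ`; (c) the highest-weight cone
`C = {a ∈ ℤⁿ | a₁ ≥ … ≥ a_n, ∑_j p^{n−j} a_j ≤ 0}` is exactly the set of integer vectors
expressible as a nonnegative rational combination of `η'_1, …, η'_{n−1}, η_ω`.
(Indexing is 0-based: the coordinate `k : Fin n` stands for `a_{k+1}`, so the hyperplane
coefficient of coordinate `k` is `p^{n−1−k}`.) -/
theorem stmt_10 (p n : ℕ) [Fact p.Prime] (hn : 2 ≤ n) :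
    let η' : ℕ → Fin n → ℚ := fun i k =>
      if (k : ℕ) < i then 1 else -(((p : ℚ) ^ n - (p : ℚ) ^ (n - i)) / ((p : ℚ) ^ (n - i) - 1))
    let ηω : Fin n → ℚ := fun _ => -((p : ℚ) - 1)
    let fam : Fin n → (Fin n → ℚ) := fun j => if (j : ℕ) + 1 < n then η' ((j : ℕ) + 1) else ηω
    (∀ i : ℕ, 1 ≤ i → i ≤ n - 1 →
        ∑ k : Fin n, (p : ℚ) ^ (n - 1 - (k : ℕ)) * η' i k = 0) ∧
    (LinearIndependent ℚ fam ∧ Submodule.span ℚ (Set.range fam) = ⊤) ∧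
    (∀ a : Fin n → ℤ,
      ((∀ j k : Fin n, j ≤ k → a k ≤ a j) ∧
          ∑ k : Fin n, (p : ℤ) ^ (n - 1 - (k : ℕ)) * a k ≤ 0)
        ↔ ∃ c : Fin n → ℚ, (∀ j, 0 ≤ c j) ∧
            (fun k => ((a k : ℚ))) = ∑ j : Fin n, c j • fam j) := by
  intro η' ηω fam
  have hq : (1 : ℚ) < p := by exact_mod_cast (Fact.out : p.Prime).one_lt
  have ha : ∀ i : ℕ, 1 ≤ i → i ≤ n - 1 →
      ∑ k : Fin n, (p : ℚ) ^ (n - 1 - (k : ℕ)) * η' i k = 0 := fun i _ hi =>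
    hyper_aux p hq n i (by omega)
  refine ⟨ha, ?_⟩
  let L : (Fin n → ℚ) →ₗ[ℚ] ℚ := ∑ k : Fin n, (p : ℚ) ^ (n - 1 - (k : ℕ)) • LinearMap.proj k
  have hL : ∀ x, L x = ∑ k : Fin n, (p : ℚ) ^ (n - 1 - (k : ℕ)) * x k := by
    intro x; simp [L, LinearMap.sum_apply]
  have hS : ((p : ℚ) - 1) * ∑ k : Fin n, (p : ℚ) ^ (n - 1 - (k : ℕ)) = (p : ℚ) ^ n - 1 := by
    rw [Fin.sum_univ_eq_sum_range (fun k => (p : ℚ) ^ (n - 1 - k)) n, geom_aux _ _ _ le_rfl]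
    simp
  have hpn : (1 : ℚ) < (p : ℚ) ^ n := one_lt_pow₀ hq (by omega)
  let φ : Fin n → ((Fin n → ℚ) →ₗ[ℚ] ℚ) := fun j =>
    if h : (j : ℕ) + 1 < n then
      (LinearMap.proj j : (Fin n → ℚ) →ₗ[ℚ] ℚ) -
        (LinearMap.proj (⟨(j : ℕ) + 1, h⟩ : Fin n) : (Fin n → ℚ) →ₗ[ℚ] ℚ)
    else -L
  have hφ1 : ∀ (j : Fin n) (h : (j : ℕ) + 1 < n) x, φ j x = x j - x ⟨(j : ℕ) + 1, h⟩ := by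
    intro j h x; simp [φ, h]
  have hφ2 : ∀ (j : Fin n) (h : ¬ (j : ℕ) + 1 < n) x, φ j x = - L x := by
    intro j h x; simp [φ, h]
  let d : Fin n → ℚ := fun j => if (j : ℕ) + 1 < n then
    1 + (((p : ℚ) ^ n - (p : ℚ) ^ (n - (j + 1))) / ((p : ℚ) ^ (n - (j + 1)) - 1)) else (p : ℚ) ^ n - 1
  -- antitone from steps
  have anti : ∀ x : Fin n → ℚ, (∀ (j : Fin n) (h : (j : ℕ) + 1 < n), x ⟨(j : ℕ) + 1, h⟩ ≤ x j) →
      ∀ j k : Fin n, j ≤ k → x k ≤ x j := by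
    intro x h j k hjk
    obtain ⟨k, hk⟩ := k
    induction k with
    | zero =>
      have : j = ⟨0, hk⟩ := by apply Fin.ext; simpa [Fin.le_def] using hjk
      rw [this]
    | succ k ih =>
      rcases Nat.lt_or_ge k j with h1 | h1
      · have : j = ⟨k + 1, hk⟩ := by
          apply Fin.ext; simp only [Fin.le_def] at hjk; simp only; omega
        rw [this]
      · exact (h ⟨k, by omega⟩ hk).trans (ih (by omega) h1)
  have hcore := core_aux fam φ d ?_ ?_ ?_
  · refine ⟨hcore.1, fun a => ?_⟩
    rw [← hcore.2]
    have hcast : L (fun k => (a k : ℚ)) = ((∑ k : Fin n, (p : ℤ) ^ (n - 1 - (k : ℕ)) * a k : ℤ) : ℚ) := by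
      rw [hL]; push_cast; rfl
    constructor
    · rintro ⟨h1, h2⟩ i
      by_cases h : (i : ℕ) + 1 < n
      · rw [hφ1 i h, sub_nonneg]
        exact_mod_cast h1 _ _ (by simp [Fin.le_def])
      · rw [hφ2 i h, hcast, neg_nonneg]
        exact_mod_cast h2
    · intro h
      constructor
      · intro j k hjk
        have := anti (fun k => (a k : ℚ)) (fun j hj => by
          have := h j
          rw [hφ1 j hj, sub_nonneg] at this
          exact this) j k hjk
        exact_mod_cast this
      · have := h ⟨n - 1, by omega⟩
        rw [hφ2 _ (by simp only; omega), hcast, neg_nonneg] at this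
        exact_mod_cast this
  · intro i
    simp only [d]
    split_ifs with h
    · have h1 : 1 < (p : ℚ) ^ (n - (i + 1 : ℕ)) := one_lt_pow₀ hq (by omega)
      have h2 : (p : ℚ) ^ (n - (i + 1 : ℕ)) ≤ (p : ℚ) ^ n := pow_le_pow_right₀ hq.le (by omega)
      have := div_nonneg (sub_nonneg.2 h2) (sub_nonneg.2 h1.le)
      linarith
    · linarith
  · intro i j
    by_cases hi : (i : ℕ) + 1 < n
    · rw [hφ1 i hi]
      by_cases hj : (j : ℕ) + 1 < n
      · by_cases hij : i = j
        · subst hij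
          simp only [fam, hi, η', d, if_true]
          rw [if_pos (by omega), if_neg (by omega), sub_neg_eq_add]
        · have : (i : ℕ) ≠ j := fun h => hij (Fin.ext h)
          simp only [fam, hj, η', hij, if_true, if_false]
          rcases lt_or_gt_of_ne this with h | h
          · rw [if_pos (by omega), if_pos (by omega), sub_self]
          · rw [if_neg (by omega), if_neg (by omega), sub_self]
      · have hij : i ≠ j := by rintro rfl; exact hj hi
        simp [fam, hj, hij, ηω]
    · rw [hφ2 i hi, hL]
      by_cases hj : (j : ℕ) + 1 < n
      · have hij : i ≠ j := by rintro rfl; exact hi hj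
        simp only [fam, hj, hij, if_true, if_false]
        rw [ha _ (by omega) (by omega), neg_zero]
      · have hij : i = j := by apply Fin.ext; omega
        simp only [fam, hj, hij, if_true, if_false, ηω, d]
        rw [← Finset.sum_mul, ← hS]; ring
  · intro x hx
    have hstep : ∀ (j : Fin n) (h : (j : ℕ) + 1 < n), x j = x ⟨(j : ℕ) + 1, h⟩ := by
      intro j h
      have := hx j
      rw [hφ1 j h] at this
      exact sub_eq_zero.1 this
    have hconst : ∀ k : Fin n, x k = x ⟨0, by omega⟩ := by
      intro k
      apply le_antisymm
      · exact anti x (fun j h => (hstep j h).ge) _ _ (by simp [Fin.le_def])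
      · have := anti (-x) (fun j h => by simp [hstep j h]) ⟨0, by omega⟩ k (by simp [Fin.le_def])
        simpa using this
    have h0 := hx ⟨n - 1, by omega⟩
    rw [hφ2 _ (by simp only; omega), hL, neg_eq_zero, Finset.sum_congr rfl (fun k _ => by rw [hconst k]),
      ← Finset.sum_mul] at h0
    have hne : ∑ k : Fin n, (p : ℚ) ^ (n - 1 - (k : ℕ)) ≠ 0 := by
      intro h
      rw [h] at hS
      linarith
    have hz := (mul_eq_zero.1 h0).resolve_left hne
    funext k
    rw [hconst k, hz]; rfl
end
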